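/- Suppose the Fractional assumptions hold and that the commutator [M_α, b] : L^φ(ℝⁿ) → L^ψ(ℝⁿ) is bounded for some b ∈ L¹_loc(ℝⁿ). Then b ∈ BMO(ℝⁿ), and there is a finite constant C independent of Q such that ‖(b − |Q|^{−α/n} M_{α,Q} b)·χ_Q‖_{L^ψ(ℝⁿ)} ≤ C‖χ_Q‖_{L^ψ(ℝⁿ)} for every cube Q ⊂ ℝⁿ. -/

import Mathlib

open MeasureTheory NNReal ENNReal Filter Set

noncomputable section

/-- `ℝⁿ` with the Euclidean structure. -/
abbrev RSp (n : ℕ) := EuclideanSpace ℝ (Fin n)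

variable {n : ℕ}

/-- A cube in `ℝⁿ` with sides parallel to the coordinate axes,
with center `c` and side length `2r`. -/
structure Cube (n : ℕ) where
  c : RSp n
  r : ℝ
  r_pos : 0 < r

/-- The underlying set of a cube. -/
def Cube.set (Q : Cube n) : Set (RSp n) := {y | ∀ i, |y i - Q.c i| ≤ Q.r}

/-- A weak Φ-function on `Ω` (the class `Φ_w(Ω)`). -/
structure IsWeakPhi (Ω : Set (RSp n)) (φ : RSp n → ℝ≥0 → ℝ≥0∞) : Prop where
  meas : ∀ f : RSp n → ℝ≥0, Measurable f →
    AEMeasurable (fun x => φ x (f x)) (volume.restrict Ω)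
  mono : ∀ x ∈ Ω, Monotone (φ x)
  zero : ∀ x ∈ Ω, φ x 0 = 0
  lim_zero : ∀ x ∈ Ω, Tendsto (fun t : ℝ≥0 => φ x t) (nhdsWithin 0 (Set.Ioi 0)) (nhds 0)
  lim_top : ∀ x ∈ Ω, Tendsto (fun t : ℝ≥0 => φ x t) atTop (nhds ∞)
  almost_inc : ∃ L : ℝ≥0, 1 ≤ L ∧ ∀ x ∈ Ω, ∀ s t : ℝ≥0, 0 < s → s < t →
    φ x s / (s : ℝ≥0∞) ≤ (L : ℝ≥0∞) * (φ x t / (t : ℝ≥0∞))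

/-- A convex Φ-function on `Ω` (the class `Φ_c(Ω)`): a weak Φ-function which is
additionally convex and left-continuous in `t` for a.e. `x ∈ Ω`. -/
structure IsConvexPhi (Ω : Set (RSp n)) (φ : RSp n → ℝ≥0 → ℝ≥0∞)
    extends IsWeakPhi Ω φ : Prop where
  convex : ∀ᵐ x ∂(volume.restrict Ω), ∀ s t a b : ℝ≥0, a + b = 1 →
    φ x (a * s + b * t) ≤ (a : ℝ≥0∞) * φ x s + (b : ℝ≥0∞) * φ x t
  left_cont : ∀ᵐ x ∂(volume.restrict Ω), ∀ t : ℝ≥0,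
    Tendsto (φ x) (nhdsWithin t (Set.Iio t)) (nhds (φ x t))

/-- A strong Φ-function on `Ω` (the class `Φ_s(Ω)`): a weak Φ-function which is
additionally convex and continuous into `[0,∞]` for a.e. `x ∈ Ω`. -/
structure IsStrongPhi (Ω : Set (RSp n)) (φ : RSp n → ℝ≥0 → ℝ≥0∞)
    extends IsWeakPhi Ω φ : Prop where
  convex : ∀ᵐ x ∂(volume.restrict Ω), ∀ s t a b : ℝ≥0, a + b = 1 →
    φ x (a * s + b * t) ≤ (a : ℝ≥0∞) * φ x s + (b : ℝ≥0∞) * φ x t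
  cont : ∀ᵐ x ∂(volume.restrict Ω), Continuous (φ x)

/-- The generalized (left-)inverse `φ⁻¹(x,t) = inf {τ ≥ 0 : φ(x,τ) ≥ t}`. -/
def phiInv (φ : RSp n → ℝ≥0 → ℝ≥0∞) (x : RSp n) (t : ℝ≥0∞) : ℝ≥0∞ :=
  sInf ((fun s : ℝ≥0 => (s : ℝ≥0∞)) '' {s : ℝ≥0 | t ≤ φ x s})

/-- The condition `(aInc)_p` on `Ω`: `t ↦ φ(x,t)/t^p` is almost increasing, uniformly in `x`. -/
def AInc (p : ℝ) (Ω : Set (RSp n)) (φ : RSp n → ℝ≥0 → ℝ≥0∞) : Prop :=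
  ∃ L : ℝ≥0, 1 ≤ L ∧ ∀ x ∈ Ω, ∀ s t : ℝ≥0, 0 < s → s < t →
    φ x s / (s : ℝ≥0∞) ^ p ≤ (L : ℝ≥0∞) * (φ x t / (t : ℝ≥0∞) ^ p)

/-- The condition `(aDec)_q` on `Ω`: `t ↦ φ(x,t)/t^q` is almost decreasing, uniformly in `x`. -/
def ADec (q : ℝ) (Ω : Set (RSp n)) (φ : RSp n → ℝ≥0 → ℝ≥0∞) : Prop :=
  ∃ L : ℝ≥0, 1 ≤ L ∧ ∀ x ∈ Ω, ∀ s t : ℝ≥0, 0 < s → s < t →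
    φ x t / (t : ℝ≥0∞) ^ q ≤ (L : ℝ≥0∞) * (φ x s / (s : ℝ≥0∞) ^ q)

/-- The condition `(A0)` on `Ω`: `β ≤ φ⁻¹(x,1) ≤ 1/β` for a.e. `x ∈ Ω`. -/
def A0 (Ω : Set (RSp n)) (φ : RSp n → ℝ≥0 → ℝ≥0∞) : Prop :=
  ∃ β : ℝ≥0, 0 < β ∧ β ≤ 1 ∧ ∀ᵐ x ∂(volume.restrict Ω),
    (β : ℝ≥0∞) ≤ phiInv φ x 1 ∧ phiInv φ x 1 ≤ (β : ℝ≥0∞)⁻¹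

/-- The condition `(A1)` (on all of `ℝⁿ`). -/
def A1 (φ : RSp n → ℝ≥0 → ℝ≥0∞) : Prop :=
  ∃ β : ℝ≥0, 0 < β ∧ β < 1 ∧ ∀ Q : Cube n, volume Q.set ≤ 1 →
    ∀ᵐ x ∂(volume.restrict Q.set), ∀ᵐ y ∂(volume.restrict Q.set),
      ∀ t : ℝ≥0∞, 1 ≤ t → t ≤ (volume Q.set)⁻¹ →
        (β : ℝ≥0∞) * phiInv φ x t ≤ phiInv φ y t

/-- The condition `(A2)` (on all of `ℝⁿ`). -/
def A2 (φ : RSp n → ℝ≥0 → ℝ≥0∞) : Prop :=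
  ∃ φi : ℝ≥0 → ℝ≥0∞, IsWeakPhi Set.univ (fun _ : RSp n => φi) ∧
  ∃ h : RSp n → ℝ≥0∞, (∫⁻ x, h x) < ∞ ∧ (∃ M : ℝ≥0, ∀ᵐ x ∂(volume : Measure (RSp n)), h x ≤ M) ∧
  ∃ β : ℝ≥0, 0 < β ∧ β ≤ 1 ∧ ∃ s : ℝ≥0, 0 < s ∧
    ∀ᵐ x ∂(volume : Measure (RSp n)), ∀ t : ℝ≥0,
      (φi t ≤ (s : ℝ≥0∞) → φ x (β * t) ≤ φi t + h x) ∧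
      (φ x t ≤ (s : ℝ≥0∞) → φi (β * t) ≤ φ x t + h x)

/-- Membership in the generalized Orlicz space `L^φ(Ω)`. -/
def MemOrlicz (φ : RSp n → ℝ≥0 → ℝ≥0∞) (Ω : Set (RSp n)) (f : RSp n → ℝ) : Prop :=
  AEMeasurable f (volume.restrict Ω) ∧
  ∃ lam : ℝ≥0, 0 < lam ∧ (∫⁻ x in Ω, φ x (lam * ‖f x‖₊) ∂volume) < ∞

/-- The Luxemburg (quasi)norm of `L^φ(Ω)`. -/
def orliczNorm (φ : RSp n → ℝ≥0 → ℝ≥0∞) (Ω : Set (RSp n)) (f : RSp n → ℝ) : ℝ≥0∞ :=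
  sInf ((fun lam : ℝ≥0 => (lam : ℝ≥0∞)) ''
    {lam : ℝ≥0 | 0 < lam ∧ (∫⁻ x in Ω, φ x (‖f x‖₊ / lam) ∂volume) ≤ 1})

/-- The canonical extension of `φ(x,·)` to `[0,∞]`. -/
def phiE (φ : RSp n → ℝ≥0 → ℝ≥0∞) (x : RSp n) (t : ℝ≥0∞) : ℝ≥0∞ :=
  ⨆ (s : ℝ≥0) (_ : (s : ℝ≥0∞) ≤ t), φ x s

/-- The Luxemburg (quasi)norm for `[0,∞]`-valued functions. -/
def orliczNormE (φ : RSp n → ℝ≥0 → ℝ≥0∞) (Ω : Set (RSp n)) (g : RSp n → ℝ≥0∞) : ℝ≥0∞ :=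
  sInf ((fun lam : ℝ≥0 => (lam : ℝ≥0∞)) ''
    {lam : ℝ≥0 | 0 < lam ∧ (∫⁻ x in Ω, phiE φ x (g x / (lam : ℝ≥0∞)) ∂volume) ≤ 1})

/-- The average `b_Q` of `b` over the cube `Q`. -/
def cubeAvg (Q : Cube n) (b : RSp n → ℝ) : ℝ := ⨍ x in Q.set, b x

/-- The BMO seminorm `‖b‖_*`. -/
def bmoNorm (b : RSp n → ℝ) : ℝ≥0∞ :=
  ⨆ Q : Cube n, (volume Q.set)⁻¹ * ∫⁻ x in Q.set, ‖b x - cubeAvg Q b‖₊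

/-- `b ∈ BMO(ℝⁿ)`. -/
def IsBMO (b : RSp n → ℝ) : Prop := LocallyIntegrable b volume ∧ bmoNorm b < ∞

/-- The non-centred Hardy–Littlewood maximal function (over axes-parallel cubes). -/
def maximal (f : RSp n → ℝ) (x : RSp n) : ℝ≥0∞ :=
  ⨆ (Q : Cube n) (_ : x ∈ Q.set), (volume Q.set)⁻¹ * ∫⁻ y in Q.set, (‖f y‖₊ : ℝ≥0∞) ∂volume

/-- The fractional maximal function `M_α`. -/
def fracMaximal (α : ℝ) (f : RSp n → ℝ) (x : RSp n) : ℝ≥0∞ :=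
  ⨆ (Q : Cube n) (_ : x ∈ Q.set),
    volume Q.set ^ (α / (n : ℝ) - 1) * ∫⁻ y in Q.set, (‖f y‖₊ : ℝ≥0∞) ∂volume

/-- The maximal function restricted to subcubes of `Q₀`. -/
def restMaximal (Q₀ : Cube n) (f : RSp n → ℝ) (x : RSp n) : ℝ≥0∞ :=
  ⨆ (Q : Cube n) (_ : x ∈ Q.set) (_ : Q.set ⊆ Q₀.set),
    (volume Q.set)⁻¹ * ∫⁻ y in Q.set, (‖f y‖₊ : ℝ≥0∞) ∂volume

/-- The fractional maximal function restricted to subcubes of `Q₀`. -/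
def restFracMaximal (α : ℝ) (Q₀ : Cube n) (f : RSp n → ℝ) (x : RSp n) : ℝ≥0∞ :=
  ⨆ (Q : Cube n) (_ : x ∈ Q.set) (_ : Q.set ⊆ Q₀.set),
    volume Q.set ^ (α / (n : ℝ) - 1) * ∫⁻ y in Q.set, (‖f y‖₊ : ℝ≥0∞) ∂volume

/-- The sharp maximal function `M♯`. -/
def sharpMaximal (f : RSp n → ℝ) (x : RSp n) : ℝ≥0∞ :=
  ⨆ (Q : Cube n) (_ : x ∈ Q.set),
    (volume Q.set)⁻¹ * ∫⁻ y in Q.set, (‖f y - ⨍ z in Q.set, f z‖₊ : ℝ≥0∞) ∂volume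

/-- The maximal commutator `M_b`. -/
def maximalComm (b f : RSp n → ℝ) (x : RSp n) : ℝ≥0∞ :=
  ⨆ (Q : Cube n) (_ : x ∈ Q.set),
    (volume Q.set)⁻¹ * ∫⁻ y in Q.set, (‖b x - b y‖₊ : ℝ≥0∞) * (‖f y‖₊ : ℝ≥0∞) ∂volume

/-- The fractional maximal commutator `M_{b,α}`. -/
def fracMaximalComm (α : ℝ) (b f : RSp n → ℝ) (x : RSp n) : ℝ≥0∞ :=
  ⨆ (Q : Cube n) (_ : x ∈ Q.set),
    volume Q.set ^ (α / (n : ℝ) - 1) *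
      ∫⁻ y in Q.set, (‖b x - b y‖₊ : ℝ≥0∞) * (‖f y‖₊ : ℝ≥0∞) ∂volume

/-- The commutator `[M,b]f = M(bf) − b·Mf` of the maximal operator. -/
def maximalCommutator (b f : RSp n → ℝ) (x : RSp n) : ℝ :=
  (maximal (fun y => b y * f y) x).toReal - b x * (maximal f x).toReal

/-- The commutator `[M_α,b]f = M_α(bf) − b·M_α f` of the fractional maximal operator. -/
def fracMaximalCommutator (α : ℝ) (b f : RSp n → ℝ) (x : RSp n) : ℝ :=
  (fracMaximal α (fun y => b y * f y) x).toReal - b x * (fracMaximal α f x).toReal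

/-- The Riesz potential `I_α f`. -/
def riesz (α : ℝ) (f : RSp n → ℝ) (x : RSp n) : ℝ :=
  ∫ y, f y / dist x y ^ ((n : ℝ) - α)

/-- The commutator `[I_α, b]f = I_α(bf) − b·I_α f` of the Riesz potential. -/
def rieszCommutator (α : ℝ) (b f : RSp n → ℝ) (x : RSp n) : ℝ :=
  riesz α (fun y => b y * f y) x - b x * riesz α f x

/-- The operator `I_{b,α} f(x) = ∫ |b(x)−b(y)|·|x−y|^{α−n} f(y) dy`. -/
def rieszAbs (α : ℝ) (b f : RSp n → ℝ) (x : RSp n) : ℝ :=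
  ∫ y, |b x - b y| / dist x y ^ ((n : ℝ) - α) * f y

/-- Equivalence `φ ≃ ψ` of Φ-functions. -/
def PhiEquiv (φ ψ : RSp n → ℝ≥0 → ℝ≥0∞) : Prop :=
  ∃ L : ℝ≥0, 1 ≤ L ∧ ∀ x : RSp n, ∀ t : ℝ≥0, ψ x (t / L) ≤ φ x t ∧ φ x t ≤ ψ x (L * t)

/-- Weak equivalence `φ ∼ ψ` of Φ-functions. -/
def PhiWeakEquiv (φ ψ : RSp n → ℝ≥0 → ℝ≥0∞) : Prop :=
  ∃ L : ℝ≥0, 1 ≤ L ∧ ∃ h : RSp n → ℝ≥0∞, (∫⁻ x, h x) < ∞ ∧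
    ∀ᵐ x ∂(volume : Measure (RSp n)), ∀ t : ℝ≥0,
      ψ x t ≤ φ x (L * t) + h x ∧ φ x t ≤ ψ x (L * t) + h x

/-- The relation `φ⁻¹(x,t) ≈ t^{α/n}·ψ⁻¹(x,t)` with constants independent of `x` and `t > 0`. -/
def FracInvRel (α : ℝ) (φ ψ : RSp n → ℝ≥0 → ℝ≥0∞) : Prop :=
  ∃ c₁ c₂ : ℝ≥0, 0 < c₁ ∧ ∀ x : RSp n, ∀ t : ℝ≥0, 0 < t →
    (c₁ : ℝ≥0∞) * ((t : ℝ≥0∞) ^ (α / (n : ℝ)) * phiInv ψ x t) ≤ phiInv φ x t ∧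
    phiInv φ x t ≤ (c₂ : ℝ≥0∞) * ((t : ℝ≥0∞) ^ (α / (n : ℝ)) * phiInv ψ x t)

/-- The characteristic function of a cube, as a real-valued function. -/
def cubeIndicator (Q : Cube n) : RSp n → ℝ := Q.set.indicator 1

end

/-- The function `(b − |Q|^{−α/n}·M_{α,Q}b)·χ_Q`. -/
noncomputable def commTestFn {n : ℕ} (α : ℝ) (Q : Cube n) (b : RSp n → ℝ) : RSp n → ℝ :=
  Q.set.indicator fun z =>
    b z - (volume Q.set ^ (-(α / (n : ℝ)))).toReal * (restFracMaximal α Q b z).toReal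

section helpers
variable {n : ℕ} {φ ψ : RSp n → ℝ≥0 → ℝ≥0∞} {x : RSp n} {u : ℝ≥0∞} {w : ℝ≥0}

lemma lt_of_lt_phiInv (h : (w : ℝ≥0∞) < phiInv φ x u) : φ x w < u := by
  by_contra hc
  rw [not_lt] at hc
  exact absurd h (not_lt.2 (sInf_le ⟨w, hc, rfl⟩))

lemma phiInv_le_of_le (h : u ≤ φ x w) : phiInv φ x u ≤ w := sInf_le ⟨w, h, rfl⟩

lemma le_of_phiInv_lt (hφ : IsWeakPhi Set.univ φ) (h : phiInv φ x u < w) : u ≤ φ x w := by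
  obtain ⟨_, ⟨s, hs, rfl⟩, h2⟩ := sInf_lt_iff.1 h
  have : s < w := ENNReal.coe_lt_coe.1 h2
  exact le_trans hs (hφ.mono x (mem_univ _) this.le)

lemma le_phiInv_of_lt (hφ : IsWeakPhi Set.univ φ) (h : φ x w < u) : (w : ℝ≥0∞) ≤ phiInv φ x u := by
  by_contra hc
  rw [not_le] at hc
  exact absurd h (not_lt.2 (le_of_phiInv_lt hφ hc))

lemma phiInv_mono {v : ℝ≥0∞} (h : u ≤ v) : phiInv φ x u ≤ phiInv φ x v := by
  apply sInf_le_sInf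
  apply Set.image_mono
  intro s hs
  exact le_trans h hs

lemma phiInv_pos (hφ : IsWeakPhi Set.univ φ) (hu : 0 < u) : 0 < phiInv φ x u := by
  have h1 := (hφ.lim_zero x (mem_univ _)).eventually (gt_mem_nhds hu)
  have h2 : ∀ᶠ t : ℝ≥0 in nhdsWithin 0 (Set.Ioi 0), (0:ℝ≥0) < t := eventually_mem_nhdsWithin
  obtain ⟨t, ht1, ht2⟩ := (h1.and h2).exists
  exact lt_of_lt_of_le (by exact_mod_cast ht2) (le_phiInv_of_lt hφ ht1)

lemma phiInv_lt_top (hφ : IsWeakPhi Set.univ φ) (hu : u < ∞) : phiInv φ x u < ∞ := by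
  have h1 := (hφ.lim_top x (mem_univ _)).eventually (lt_mem_nhds hu)
  obtain ⟨t, ht1⟩ := h1.exists
  exact lt_of_le_of_lt (phiInv_le_of_le ht1.le) ENNReal.coe_lt_top

/-- `φ(x,s) ≤ k⁻¹ φ(x, L k s)`. -/
lemma phi_scale {L : ℝ≥0} (hL : 1 ≤ L) (hφ : IsWeakPhi Set.univ φ)
    (hinc : ∀ x ∈ (Set.univ : Set (RSp n)), ∀ s t : ℝ≥0, 0 < s → s < t →
    φ x s / (s : ℝ≥0∞) ≤ (L : ℝ≥0∞) * (φ x t / (t : ℝ≥0∞))) (x : RSp n) (s k : ℝ≥0) (hk : 1 ≤ k) :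
    (k : ℝ≥0∞) * φ x s ≤ φ x (L * k * s) := by
  rcases eq_or_lt_of_le (show (0 : ℝ≥0) ≤ s from zero_le) with h0 | h0
  · subst h0
    rw [hφ.zero x (mem_univ _)]; simp
  · have hLk : 1 ≤ L * k := one_le_mul hL hk
    rcases eq_or_lt_of_le hLk with h1 | h1
    · have hk1 : k = 1 := le_antisymm (by
        calc k = 1 * k := by simp
          _ ≤ L * k := by gcongr
          _ = 1 := h1.symm) hk
      have hL1 : L = 1 := by rw [hk1] at h1; simpa using h1.symm
      simp [hk1, hL1]
    · have hlt : s < L * k * s := by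
        calc s = 1 * s := by simp
          _ < L * k * s := by gcongr
      have h := hinc x (mem_univ _) s (L * k * s) h0 hlt
      have hs0 : (s : ℝ≥0∞) ≠ 0 := by exact_mod_cast h0.ne'
      have hL0 : (L : ℝ≥0∞) ≠ 0 := by exact_mod_cast (lt_of_lt_of_le one_pos hL).ne'
      have hk0 : (k : ℝ≥0∞) ≠ 0 := by exact_mod_cast (lt_of_lt_of_le one_pos hk).ne'
      calc (k : ℝ≥0∞) * φ x s = k * (φ x s / s * s) := by
            rw [ENNReal.div_mul_cancel hs0 ENNReal.coe_ne_top]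
        _ ≤ k * ((L : ℝ≥0∞) * (φ x (L * k * s) / ((L * k * s : ℝ≥0) : ℝ≥0∞)) * s) := by gcongr
        _ = (φ x (L * k * s) / ((L * k * s : ℝ≥0) : ℝ≥0∞)) * ((L * k * s : ℝ≥0) : ℝ≥0∞) := by
            push_cast; ring
        _ = φ x (L * k * s) := by
            apply ENNReal.div_mul_cancel
            · push_cast
              exact mul_ne_zero (mul_ne_zero hL0 hk0) hs0
            · exact ENNReal.coe_ne_top

lemma phiInv_scale {L : ℝ≥0} (hL : 1 ≤ L) (hφ : IsWeakPhi Set.univ φ)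
    (hinc : ∀ x ∈ (Set.univ : Set (RSp n)), ∀ s t : ℝ≥0, 0 < s → s < t →
    φ x s / (s : ℝ≥0∞) ≤ (L : ℝ≥0∞) * (φ x t / (t : ℝ≥0∞))) (x : RSp n) (k : ℝ≥0) (hk : 1 ≤ k)
    (u : ℝ≥0∞) : phiInv φ x (k * u) ≤ (L : ℝ≥0∞) * k * phiInv φ x u := by
  have hL0 : (L : ℝ≥0∞) ≠ 0 := by exact_mod_cast (lt_of_lt_of_le one_pos hL).ne'
  have hk0 : (k : ℝ≥0∞) ≠ 0 := by exact_mod_cast (lt_of_lt_of_le one_pos hk).ne'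
  have hLk0 : (L : ℝ≥0∞) * k ≠ 0 := mul_ne_zero hL0 hk0
  have hLkt : (L : ℝ≥0∞) * k ≠ ∞ := ENNReal.mul_ne_top ENNReal.coe_ne_top ENNReal.coe_ne_top
  rw [mul_comm _ (phiInv φ x u), ← ENNReal.div_le_iff_le_mul (Or.inl hLk0) (Or.inl hLkt)]
  apply le_sInf
  rintro _ ⟨s, hs, rfl⟩
  rw [ENNReal.div_le_iff_le_mul (Or.inl hLk0) (Or.inl hLkt), mul_comm (s : ℝ≥0∞)]
  have : (k : ℝ≥0∞) * u ≤ φ x (L * k * s) := by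
    refine le_trans ?_ (phi_scale hL hφ hinc x s k hk)
    gcongr
    exact hs
  simpa using phiInv_le_of_le this

/-- pointwise comparison of `φ` and `ψ`. -/
lemma phi_le_psi {a : ℝ} (ha : 0 ≤ a) (hφ : IsWeakPhi Set.univ φ) (hψ : IsWeakPhi Set.univ ψ)
    {c₁ : ℝ≥0} (hc : 0 < c₁)
    (h : ∀ t : ℝ≥0, 0 < t → (c₁ : ℝ≥0∞) * ((t : ℝ≥0∞) ^ a * phiInv ψ x t) ≤ phiInv φ x t)
    (t s : ℝ≥0) (ht : 0 < t) :
    φ x (c₁ / 2 * (t ^ a * s)) ≤ 2 * (ψ x s + t) := by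
  rcases eq_or_lt_of_le (show (0 : ℝ≥0) ≤ s from zero_le) with h0 | h0
  · subst h0
    simp [hφ.zero x (mem_univ _)]
  rcases eq_or_ne (ψ x s) ∞ with h1 | h1
  · simp [h1]
  lift ψ x s to ℝ≥0 using h1 with v hv
  set U : ℝ≥0 := 2 * (v + t) with hU
  have hUt : t < U := by
    rw [hU, two_mul]; exact lt_of_lt_of_le (lt_add_of_pos_right t ht) (by gcongr <;> simp)
  have hUv : v < U := by
    rw [hU, two_mul]; exact lt_of_lt_of_le (lt_add_of_pos_right v ht) (by gcongr <;> simp)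
  have h2 : (s : ℝ≥0∞) ≤ phiInv ψ x U := by
    apply le_phiInv_of_lt hψ
    rw [← hv]; exact_mod_cast hUv
  have h3 := h U (lt_trans ht hUt)
  have hta : 0 < t ^ a := NNReal.rpow_pos ht
  have h4 : ((c₁ / 2 * (t ^ a * s) : ℝ≥0) : ℝ≥0∞) < phiInv φ x U := by
    calc ((c₁ / 2 * (t ^ a * s) : ℝ≥0) : ℝ≥0∞) < ((c₁ * (t ^ a * s) : ℝ≥0) : ℝ≥0∞) := by
          norm_cast
          have := half_lt_self hc
          have := mul_pos hta h0
          gcongr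
      _ = c₁ * ((t : ℝ≥0∞) ^ a * s) := by
          push_cast; rw [ENNReal.coe_rpow_of_nonneg _ ha]
      _ ≤ c₁ * ((U : ℝ≥0∞) ^ a * phiInv ψ x U) := by
          gcongr
      _ ≤ _ := h3
  have h5 := (lt_of_lt_phiInv h4).le
  simpa [hU] using h5

/-- Comparison of `ψ⁻¹` at two points from that of `φ⁻¹`. -/
lemma psiInv_compare {a : ℝ} {c₁ c₂ D : ℝ≥0} (hc : 0 < c₁) {y : RSp n} (t : ℝ≥0) (ht : 0 < t)
    (h1 : (c₁ : ℝ≥0∞) * ((t : ℝ≥0∞) ^ a * phiInv ψ x t) ≤ phiInv φ x t)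
    (h2 : phiInv φ y t ≤ (c₂ : ℝ≥0∞) * ((t : ℝ≥0∞) ^ a * phiInv ψ y t))
    (h3 : phiInv φ x t ≤ D * phiInv φ y t) :
    phiInv ψ x t ≤ ((D * c₂ / c₁ : ℝ≥0) : ℝ≥0∞) * phiInv ψ y t := by
  have ht0 : (t : ℝ≥0∞) ≠ 0 := by exact_mod_cast ht.ne'
  have e0 : (t : ℝ≥0∞) ^ a ≠ 0 := by
    simp [ENNReal.rpow_eq_zero_iff, ht.ne']
  have e1 : (t : ℝ≥0∞) ^ a ≠ ∞ := by
    simp [ENNReal.rpow_eq_top_iff, ht.ne']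
  have hc0 : (c₁ : ℝ≥0∞) ≠ 0 := by exact_mod_cast hc.ne'
  rw [← ENNReal.mul_le_mul_iff_right (a := (t : ℝ≥0∞) ^ a) e0 e1,
    ← ENNReal.mul_le_mul_iff_right (a := (c₁ : ℝ≥0∞)) hc0 ENNReal.coe_ne_top]
  refine (h1.trans h3).trans ?_
  calc (D : ℝ≥0∞) * phiInv φ y t ≤ D * ((c₂ : ℝ≥0∞) * ((t : ℝ≥0∞) ^ a * phiInv ψ y t)) := by gcongr
    _ = (c₁ * (D * c₂ / c₁) : ℝ≥0) * ((t : ℝ≥0∞) ^ a * phiInv ψ y t) := by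
      rw [mul_div_cancel₀ _ hc.ne']; push_cast; ring
    _ = _ := by push_cast; ring

/-- Two-point comparison of `φ⁻¹` coming from `(A2)`. -/
lemma A2_compare (hφ : IsWeakPhi Set.univ φ) {L : ℝ≥0} (hL : 1 ≤ L)
    (hinc : ∀ x ∈ (Set.univ : Set (RSp n)), ∀ s t : ℝ≥0, 0 < s → s < t →
    φ x s / (s : ℝ≥0∞) ≤ (L : ℝ≥0∞) * (φ x t / (t : ℝ≥0∞)))
    {φi : ℝ≥0 → ℝ≥0∞} {h : RSp n → ℝ≥0∞} {β s : ℝ≥0} (hβ : 0 < β) {y : RSp n}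
    (hx : ∀ t : ℝ≥0, φ x t ≤ (s : ℝ≥0∞) → φi (β * t) ≤ φ x t + h x)
    (hy : ∀ t : ℝ≥0, φi t ≤ (s : ℝ≥0∞) → φ y (β * t) ≤ φi t + h y)
    (u : ℝ≥0) (hu : 0 < u) (hus : 2 * u ≤ s) (hxu : h x ≤ u) (hyu : h y ≤ u) :
    phiInv φ x u ≤ ((4 * L / (β * β) : ℝ≥0) : ℝ≥0∞) * phiInv φ y u := by
  apply ENNReal.le_of_forall_nnreal_lt
  intro w hw
  have h1 := lt_of_lt_phiInv hw
  have hus' : (u : ℝ≥0∞) + u ≤ s := by rw [← two_mul]; exact_mod_cast hus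
  have h2 := hx w (h1.le.trans (le_trans le_self_add hus'))
  have h3 : φi (β * w) ≤ u + u := h2.trans (add_le_add h1.le hxu)
  have h4 := hy _ (h3.trans hus')
  have h5 : φ y (β * (β * w)) < ((4 : ℝ≥0) : ℝ≥0∞) * u := by
    refine lt_of_le_of_lt (h4.trans (add_le_add h3 hyu)) ?_
    norm_cast
    have : u + u + u < u + u + u + u := lt_add_of_pos_right _ hu
    calc u + u + u < u + u + u + u := this
      _ = 4 * u := by ring
  have h6 := (le_phiInv_of_lt hφ h5).trans (phiInv_scale hL hφ hinc y 4 (by norm_num) u)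
  have hb : ((β * β : ℝ≥0) : ℝ≥0∞) ≠ 0 := by exact_mod_cast (mul_pos hβ hβ).ne'
  rw [← ENNReal.mul_le_mul_iff_right hb ENNReal.coe_ne_top]
  calc ((β * β : ℝ≥0) : ℝ≥0∞) * w = ((β * (β * w) : ℝ≥0) : ℝ≥0∞) := by push_cast; ring
    _ ≤ _ := h6
    _ = (((β * β) * (4 * L / (β * β)) : ℝ≥0) : ℝ≥0∞) * phiInv φ y u := by
      rw [mul_div_cancel₀ _ (mul_pos hβ hβ).ne']; push_cast; ring
    _ = _ := by push_cast; ring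

end helpers
section geometry
variable {n : ℕ}

lemma Cube.set_eq (Q : Cube n) : Q.set = (@WithLp.ofLp 2 (Fin n → ℝ)) ⁻¹'
    (Set.pi Set.univ fun i => Set.Icc (Q.c i - Q.r) (Q.c i + Q.r)) := by
  ext y
  simp only [Cube.set, Set.mem_setOf_eq, Set.mem_preimage, Set.mem_pi, Set.mem_univ, true_imp_iff,
    Set.mem_Icc, abs_le]
  refine forall_congr' fun i => ?_
  constructor <;> rintro ⟨h1, h2⟩ <;> constructor <;> linarith

lemma Cube.volume_set (Q : Cube n) : volume Q.set = ENNReal.ofReal (2 * Q.r) ^ n := by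
  rw [Cube.set_eq, (PiLp.volume_preserving_ofLp (Fin n)).measure_preimage
    (MeasurableSet.univ_pi fun i => measurableSet_Icc).nullMeasurableSet, volume_pi_pi]
  simp only [Real.volume_Icc]
  have : ∀ i, Q.c i + Q.r - (Q.c i - Q.r) = 2 * Q.r := fun i => by ring
  simp [this]

lemma Cube.isClosed_set (Q : Cube n) : IsClosed Q.set := by
  have : Q.set = ⋂ i, {y : RSp n | |y i - Q.c i| ≤ Q.r} := by
    ext y; simp [Cube.set]
  rw [this]
  refine isClosed_iInter fun i => isClosed_le ?_ continuous_const
  fun_prop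

lemma Cube.measurableSet (Q : Cube n) : MeasurableSet Q.set := Q.isClosed_set.measurableSet

lemma Cube.volume_pos (Q : Cube n) : 0 < volume Q.set := by
  rw [Q.volume_set]
  have := Q.r_pos
  exact ENNReal.pow_pos (by simpa using this) n

lemma Cube.volume_lt_top (Q : Cube n) : volume Q.set < ∞ := by
  rw [Q.volume_set]
  exact ENNReal.pow_lt_top ENNReal.ofReal_lt_top

lemma Cube.subset_closedBall (hn : 0 < n) (Q : Cube n) {x : RSp n} (hx : x ∈ Q.set) :
    Q.set ⊆ Metric.closedBall x (2 * Q.r * n) := by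
  intro y hy
  rw [Metric.mem_closedBall, EuclideanSpace.dist_eq]
  have hr := Q.r_pos
  have hn1 : (1 : ℝ) ≤ n := by exact_mod_cast hn
  apply Real.sqrt_le_iff.2
  refine ⟨by positivity, ?_⟩
  calc ∑ i, dist (y i) (x i) ^ 2 ≤ ∑ i : Fin n, (2 * Q.r) ^ 2 := by
        refine Finset.sum_le_sum fun i _ => ?_
        have h1 := abs_le.1 (hx i)
        have h2 := abs_le.1 (hy i)
        have : dist (y i) (x i) ≤ 2 * Q.r := by
          rw [Real.dist_eq, abs_le]; constructor <;> linarith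
        gcongr
    _ = n * (2 * Q.r) ^ 2 := by simp
    _ ≤ (n * n) * (2 * Q.r) ^ 2 := by
        gcongr
        nlinarith
    _ = (2 * Q.r * n) ^ 2 := by ring

lemma Cube.center_mem (Q : Cube n) : Q.c ∈ Q.set := fun i => by simpa using Q.r_pos.le

lemma Cube.isCompact_set (hn : 0 < n) (Q : Cube n) : IsCompact Q.set :=
  (isCompact_closedBall _ _).of_isClosed_subset Q.isClosed_set
    (Q.subset_closedBall hn Q.center_mem)

lemma Cube.shift (Q₀ Q' : Cube n) {x : RSp n} (hx0 : x ∈ Q₀.set) (hx' : x ∈ Q'.set) :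
    ∃ Q'' : Cube n, x ∈ Q''.set ∧ Q''.set ⊆ Q₀.set ∧ Q'.set ∩ Q₀.set ⊆ Q''.set ∧
      volume Q''.set ≤ volume Q'.set := by
  by_cases h : Q₀.r ≤ Q'.r
  · refine ⟨Q₀, hx0, Subset.rfl, inter_subset_right, ?_⟩
    rw [Q₀.volume_set, Q'.volume_set]
    gcongr
  · push Not at h
    let c : RSp n := WithLp.toLp 2 fun i =>
      max (Q₀.c i - (Q₀.r - Q'.r)) (min (Q'.c i) (Q₀.c i + (Q₀.r - Q'.r)))
    have key : Q'.set ∩ Q₀.set ⊆ (Cube.mk c Q'.r Q'.r_pos).set := by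
      rintro y ⟨h1, h2⟩ i
      have h1 := abs_le.1 (h1 i)
      have h2 := abs_le.1 (h2 i)
      simp only [c]
      rw [abs_le]
      rcases max_cases (Q₀.c i - (Q₀.r - Q'.r)) (min (Q'.c i) (Q₀.c i + (Q₀.r - Q'.r))) with
        ⟨e, e'⟩ | ⟨e, e'⟩ <;> rw [e] <;>
      rcases min_cases (Q'.c i) (Q₀.c i + (Q₀.r - Q'.r)) with ⟨f, f'⟩ | ⟨f, f'⟩ <;>
        (try rw [f]) <;> rw [f] at e' <;> constructor <;> linarith
    refine ⟨⟨c, Q'.r, Q'.r_pos⟩, key ⟨hx', hx0⟩, ?_, key, ?_⟩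
    · intro y hy i
      have h1 := abs_le.1 (hy i)
      simp only [c] at h1
      have e1 : Q₀.c i - (Q₀.r - Q'.r) ≤
        max (Q₀.c i - (Q₀.r - Q'.r)) (min (Q'.c i) (Q₀.c i + (Q₀.r - Q'.r))) := le_max_left _ _
      have e2 : max (Q₀.c i - (Q₀.r - Q'.r)) (min (Q'.c i) (Q₀.c i + (Q₀.r - Q'.r))) ≤
        Q₀.c i + (Q₀.r - Q'.r) := max_le (by linarith) (min_le_right _ _)
      rw [abs_le]; constructor <;> linarith
    · rw [Cube.volume_set, Cube.volume_set]

lemma lintegral_mul_cubeIndicator (Q₀ : Cube n) (b : RSp n → ℝ) (s : Set (RSp n)) :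
    ∫⁻ y in s, (‖b y * cubeIndicator Q₀ y‖₊ : ℝ≥0∞) = ∫⁻ y in s ∩ Q₀.set, (‖b y‖₊ : ℝ≥0∞) := by
  have : (fun y => (‖b y * cubeIndicator Q₀ y‖₊ : ℝ≥0∞)) =
      Q₀.set.indicator fun y => (‖b y‖₊ : ℝ≥0∞) := by
    ext y
    by_cases hy : y ∈ Q₀.set <;> simp [cubeIndicator, hy]
  rw [this, lintegral_indicator Q₀.measurableSet, Measure.restrict_restrict Q₀.measurableSet,
    inter_comm]

lemma rpow_nonpos_anti {x y : ℝ≥0∞} {z : ℝ} (hz : z ≤ 0) (h : x ≤ y) : y ^ z ≤ x ^ z := by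
  obtain ⟨w, rfl⟩ : ∃ w, z = -w := ⟨-z, by ring⟩
  rw [ENNReal.rpow_neg, ENNReal.rpow_neg]
  apply ENNReal.inv_le_inv.2
  exact ENNReal.rpow_le_rpow h (by linarith)

lemma fracMaximal_mul_indicator {α : ℝ} (ha : α / (n : ℝ) ≤ 1) (Q₀ : Cube n) (b : RSp n → ℝ)
    {x : RSp n} (hx : x ∈ Q₀.set) :
    fracMaximal α (fun y => b y * cubeIndicator Q₀ y) x = restFracMaximal α Q₀ b x := by
  apply le_antisymm
  · refine iSup₂_le fun Q' hx' => ?_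
    obtain ⟨Q'', h1, h2, h3, h4⟩ := Cube.shift Q₀ Q' hx hx'
    refine le_trans ?_ (le_iSup_of_le Q'' (le_iSup_of_le h1 (le_iSup_of_le h2 le_rfl)))
    rw [lintegral_mul_cubeIndicator]
    gcongr ?_ * ?_
    · exact rpow_nonpos_anti (by linarith) h4
    · exact lintegral_mono_set h3
  · refine iSup_le fun Q' => iSup_le fun h1 => iSup_le fun h2 => ?_
    refine le_trans ?_ (le_iSup_of_le Q' (le_iSup_of_le h1 le_rfl))
    rw [lintegral_mul_cubeIndicator, inter_eq_left.2 h2]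

lemma fracMaximal_indicator {α : ℝ} (ha0 : 0 ≤ α / (n : ℝ)) (ha : α / (n : ℝ) ≤ 1) (Q₀ : Cube n)
    {x : RSp n} (hx : x ∈ Q₀.set) :
    fracMaximal α (cubeIndicator Q₀) x = volume Q₀.set ^ (α / (n : ℝ)) := by
  have h := fracMaximal_mul_indicator ha Q₀ (fun _ => 1) hx
  simp only [one_mul] at h
  have e : ∀ Q : Cube n, volume Q.set ^ (α / (n : ℝ) - 1) *
      ∫⁻ y in Q.set, (‖(1 : ℝ)‖₊ : ℝ≥0∞) = volume Q.set ^ (α / (n : ℝ)) := by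
    intro Q
    have h0 := Q.volume_pos.ne'
    have h1 := Q.volume_lt_top.ne
    simp only [nnnorm_one, ENNReal.coe_one, lintegral_one, Measure.restrict_apply_univ]
    conv_lhs => rw [← ENNReal.rpow_one (volume Q.set), ← ENNReal.rpow_mul, one_mul]
    rw [← ENNReal.rpow_add _ _ h0 h1]
    congr 1; ring
  rw [show fracMaximal α (cubeIndicator Q₀) x = _ from h]
  apply le_antisymm
  · refine iSup_le fun Q' => iSup_le fun h1 => iSup_le fun h2 => ?_
    rw [e]
    exact ENNReal.rpow_le_rpow (measure_mono h2) ha0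
  · refine le_trans ?_ (le_iSup_of_le Q₀ (le_iSup_of_le hx (le_iSup_of_le Subset.rfl le_rfl)))
    rw [e]

/-- on `Q`, the test function is the normalized commutator. -/
lemma commTestFn_eq {α : ℝ} (ha0 : 0 ≤ α / (n : ℝ)) (ha : α / (n : ℝ) ≤ 1) (Q : Cube n)
    (b : RSp n → ℝ) {x : RSp n} (hx : x ∈ Q.set) :
    commTestFn α Q b x = - (((volume Q.set).toReal ^ (α / (n : ℝ)))⁻¹ *
      fracMaximalCommutator α b (cubeIndicator Q) x) := by
  have hv : 0 < (volume Q.set).toReal := ENNReal.toReal_pos Q.volume_pos.ne' Q.volume_lt_top.ne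
  have hv2 : 0 < (volume Q.set).toReal ^ (α / (n : ℝ)) := Real.rpow_pos_of_pos hv _
  simp only [commTestFn, fracMaximalCommutator, Set.indicator_of_mem hx,
    fracMaximal_mul_indicator ha Q b hx, fracMaximal_indicator ha0 ha Q hx]
  rw [← ENNReal.toReal_rpow, ← ENNReal.toReal_rpow, Real.rpow_neg hv.le]
  field_simp
  ring

/-- the restricted maximal function is a.e. finite. -/
lemma restFracMaximal_lt_top (hn : 0 < n) {α : ℝ} (ha0 : 0 ≤ α / (n : ℝ)) (ha : α / (n : ℝ) ≤ 1)
    (b : RSp n → ℝ) (hb : LocallyIntegrable b volume) (Q₀ : Cube n) :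
    ∀ᵐ x ∂(volume : Measure (RSp n)), restFracMaximal α Q₀ b x < ∞ := by
  have hbn : LocallyIntegrable (fun x => ‖b x‖) volume := by
    intro x
    obtain ⟨s, hs, hi⟩ := hb x
    exact ⟨s, hs, hi.norm⟩
  have hn0 : (0 : ℝ) < n := by exact_mod_cast hn
  filter_upwards [IsUnifLocDoublingMeasure.ae_tendsto_average (μ := volume) hbn 1] with x hx
  have h1 := hx (l := nhdsWithin (0 : ℝ) (Ioi 0)) (fun _ => x) id tendsto_id (by
    filter_upwards [self_mem_nhdsWithin] with r hr
    simpa using (le_of_lt hr))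
  have h2 := h1.eventually (gt_mem_nhds (lt_add_one _))
  rw [eventually_nhdsWithin_iff, Metric.eventually_nhds_iff] at h2
  obtain ⟨δ, hδ, h2⟩ := h2
  set K : ℝ := ‖b x‖ + 1
  have hI : ∀ s : Set (RSp n), IsCompact s → ∫⁻ y in s, (‖b y‖₊ : ℝ≥0∞) < ∞ := by
    intro s hs
    exact (hb.integrableOn_isCompact hs).2
  -- small balls
  have h3 : ∀ R : ℝ, 0 < R → R < δ → ∫⁻ y in Metric.closedBall x R, (‖b y‖₊ : ℝ≥0∞) ≤
      ENNReal.ofReal K * volume (Metric.closedBall x R) := by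
    intro R hR hRδ
    have h4 := h2 (y := R) (by simpa [abs_of_pos hR] using hRδ) hR
    have hvol : 0 < volume (Metric.closedBall x R) := Metric.measure_closedBall_pos _ _ hR
    have hvol' : volume (Metric.closedBall x R) < ∞ := measure_closedBall_lt_top
    have hvr : 0 < volume.real (Metric.closedBall x R) := ENNReal.toReal_pos hvol.ne' hvol'.ne
    rw [id, setAverage_eq, smul_eq_mul, inv_mul_lt_iff₀ hvr] at h4
    have h5 : ∫⁻ y in Metric.closedBall x R, (‖b y‖₊ : ℝ≥0∞) =
        ENNReal.ofReal (∫ y in Metric.closedBall x R, ‖b y‖) := by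
      rw [ofReal_integral_norm_eq_lintegral_enorm
        (hb.integrableOn_isCompact (isCompact_closedBall _ _))]
      rfl
    rw [h5, ← ENNReal.ofReal_toReal hvol'.ne, ← ENNReal.ofReal_mul (by positivity)]
    apply ENNReal.ofReal_le_ofReal
    rw [mul_comm]
    exact h4.le
  set V := volume (Metric.closedBall (0 : RSp n) 1)
  have hV : V < ∞ := measure_closedBall_lt_top
  set B1 : ℝ≥0∞ := volume Q₀.set ^ (α / (n : ℝ)) * (ENNReal.ofReal K * (ENNReal.ofReal n ^ n * V))
  set B2 : ℝ≥0∞ := (ENNReal.ofReal (δ / n) ^ n) ^ (α / (n : ℝ) - 1) *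
    ∫⁻ y in Q₀.set, (‖b y‖₊ : ℝ≥0∞)
  have hB1 : B1 < ∞ := by
    refine ENNReal.mul_lt_top (ENNReal.rpow_lt_top_of_nonneg ha0 Q₀.volume_lt_top.ne)
      (ENNReal.mul_lt_top ENNReal.ofReal_lt_top
      (ENNReal.mul_lt_top (ENNReal.pow_lt_top ENNReal.ofReal_lt_top) hV))
  have hB2 : B2 < ∞ := by
    refine ENNReal.mul_lt_top ?_ (hI _ (Q₀.isCompact_set hn))
    rw [lt_top_iff_ne_top, Ne, ENNReal.rpow_eq_top_iff]
    have e1 : ENNReal.ofReal (δ / n) ^ n ≠ 0 := by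
      apply pow_ne_zero
      have : 0 < δ / n := by positivity
      simpa using this
    have e2 : ENNReal.ofReal (δ / n) ^ n ≠ ∞ := (ENNReal.pow_lt_top ENNReal.ofReal_lt_top).ne
    tauto
  refine lt_of_le_of_lt ?_ (max_lt hB1 hB2)
  refine iSup_le fun Q => iSup_le fun hxQ => iSup_le fun hQ => ?_
  have hr := Q.r_pos
  by_cases hR : 2 * Q.r * n < δ
  · apply le_max_of_le_left
    have h6 := h3 (2 * Q.r * n) (by positivity) hR
    have h7 : volume (Metric.closedBall x (2 * Q.r * n)) =
        volume Q.set * (ENNReal.ofReal n ^ n * V) := by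
      rw [Measure.addHaar_closedBall' _ _ (by positivity), finrank_euclideanSpace_fin, Q.volume_set,
        ENNReal.ofReal_pow (by positivity), ENNReal.ofReal_mul (by positivity), mul_pow, mul_assoc]
    have h0 := Q.volume_pos.ne'
    have h1 := Q.volume_lt_top.ne
    calc volume Q.set ^ (α / (n : ℝ) - 1) * ∫⁻ y in Q.set, (‖b y‖₊ : ℝ≥0∞)
        ≤ volume Q.set ^ (α / (n : ℝ) - 1) *
          (ENNReal.ofReal K * (volume Q.set * (ENNReal.ofReal n ^ n * V))) := by
          rw [← h7]
          gcongr
          exact le_trans (lintegral_mono_set (Q.subset_closedBall hn hxQ)) h6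
      _ = (volume Q.set ^ (α / (n : ℝ) - 1) * volume Q.set) *
          (ENNReal.ofReal K * (ENNReal.ofReal n ^ n * V)) := by ring
      _ = volume Q.set ^ (α / (n : ℝ)) *
          (ENNReal.ofReal K * (ENNReal.ofReal n ^ n * V)) := by
          congr 1
          conv_lhs => rw [← ENNReal.rpow_one (volume Q.set), ← ENNReal.rpow_mul, one_mul]
          rw [← ENNReal.rpow_add _ _ h0 h1]
          congr 1; ring
      _ ≤ B1 := by
          simp only [B1]
          gcongr
  · apply le_max_of_le_right
    push Not at hR
    simp only [B2]
    gcongr ?_ * ?_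
    · apply rpow_nonpos_anti (by linarith)
      rw [Q.volume_set]
      gcongr
      rw [div_le_iff₀ hn0]
      exact hR
    · exact lintegral_mono_set hQ

end geometry
section key
variable {n : ℕ} {φ ψ : RSp n → ℝ≥0 → ℝ≥0∞}

/-- the two estimates characterizing the size of `χ_Q` in `L^ψ`. -/
def KeyEst (ψ : RSp n → ℝ≥0 → ℝ≥0∞) (C : ℝ≥0) (Q : Cube n) : Prop :=
  ∃ S : ℝ≥0, 0 < S ∧ ∃ H : RSp n → ℝ≥0∞, (∫⁻ x in Q.set, H x) ≤ C ∧
    ∀ᵐ x ∂(volume.restrict Q.set),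
      ψ x (S / C) ≤ C * ((volume Q.set)⁻¹ + H x) ∧
      ∀ g : ℝ≥0, (volume Q.set)⁻¹ * g ≤ ψ x (C * g * S) + (volume Q.set)⁻¹ + H x

lemma KeyEst.mono (hψ : IsWeakPhi Set.univ ψ) {C C' : ℝ≥0} (hC : 0 < C) (h : C ≤ C') {Q : Cube n}
    (hk : KeyEst ψ C Q) : KeyEst ψ C' Q := by
  obtain ⟨S, hS, H, hH, hx⟩ := hk
  refine ⟨S, hS, H, hH.trans (by exact_mod_cast h), ?_⟩
  filter_upwards [hx] with x hx
  refine ⟨?_, fun g => ?_⟩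
  · refine (hψ.mono x (mem_univ _) ?_).trans (hx.1.trans ?_)
    · gcongr
    · gcongr
  · refine (hx.2 g).trans ?_
    gcongr
    exact hψ.mono x (mem_univ _) (by gcongr)

lemma ae_restrict_exists (Q : Cube n) {P : RSp n → Prop}
    (h : ∀ᵐ x ∂(volume.restrict Q.set), P x) : ∃ x, P x := by
  have : NeBot (ae (volume.restrict Q.set)) := by
    rw [ae_neBot, Ne, Measure.restrict_eq_zero]
    exact Q.volume_pos.ne'
  exact h.exists

/-- Small cubes. -/
lemma key_small {a : ℝ} (hψ : IsWeakPhi Set.univ ψ)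
    {c₁ c₂ : ℝ≥0} (hc : 0 < c₁) (hinv : ∀ x : RSp n, ∀ t : ℝ≥0, 0 < t →
    (c₁ : ℝ≥0∞) * ((t : ℝ≥0∞) ^ a * phiInv ψ x t) ≤ phiInv φ x t ∧
    phiInv φ x t ≤ (c₂ : ℝ≥0∞) * ((t : ℝ≥0∞) ^ a * phiInv ψ x t)) (ha1 : A1 φ) :
    ∃ C : ℝ≥0, 1 ≤ C ∧ ∀ Q : Cube n, volume Q.set ≤ 1 → KeyEst ψ C Q := by
  obtain ⟨L, hL, hinc⟩ := hψ.almost_inc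
  obtain ⟨β, hβ, hβ1, hA⟩ := ha1
  set E : ℝ≥0 := β⁻¹ * c₂ / c₁ + 1 with hE
  have hE1 : 1 ≤ E := by rw [hE]; simp
  refine ⟨2 * (L * E), ?_, ?_⟩
  · have := one_le_mul hL hE1
    exact le_trans this (by rw [two_mul]; simp)
  intro Q hQ
  obtain ⟨t, ht⟩ : ∃ t : ℝ≥0, (t : ℝ≥0∞) = (volume Q.set)⁻¹ :=
    ⟨_, ENNReal.coe_toNNReal (ENNReal.inv_ne_top.2 Q.volume_pos.ne')⟩
  have ht0 : 0 < t := by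
    have : (0 : ℝ≥0∞) < t := by rw [ht]; exact ENNReal.inv_pos.2 Q.volume_lt_top.ne
    exact_mod_cast this
  have ht1 : (1 : ℝ≥0∞) ≤ t := by rw [ht]; exact ENNReal.one_le_inv.2 hQ
  have hAt : ∀ᵐ x ∂(volume.restrict Q.set), ∀ᵐ y ∂(volume.restrict Q.set),
      phiInv ψ x t ≤ E * phiInv ψ y t := by
    filter_upwards [hA Q hQ] with x hx
    filter_upwards [hx] with y hy
    have h1 := hy t ht1 ht.le
    have h2 : phiInv φ x t ≤ ((β⁻¹ : ℝ≥0) : ℝ≥0∞) * phiInv φ y t := by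
      have hb : (β : ℝ≥0∞) ≠ 0 := by exact_mod_cast hβ.ne'
      rw [ENNReal.coe_inv hβ.ne']
      rw [← ENNReal.div_eq_inv_mul, ENNReal.le_div_iff_mul_le (Or.inl hb)
        (Or.inl ENNReal.coe_ne_top), mul_comm]
      exact h1
    refine (psiInv_compare hc t ht0 (hinv x t ht0).1 (hinv y t ht0).2 h2).trans ?_
    gcongr
    rw [hE]; simp
  set S' := essInf (fun y => phiInv ψ y t) (volume.restrict Q.set) with hS'
  have hS1 : ∀ᵐ x ∂(volume.restrict Q.set), S' ≤ phiInv ψ x t := ae_essInf_le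
  have hE0 : (E : ℝ≥0∞) ≠ 0 := by exact_mod_cast (lt_of_lt_of_le one_pos hE1).ne'
  have hS2 : ∀ᵐ x ∂(volume.restrict Q.set), phiInv ψ x t ≤ E * S' := by
    filter_upwards [hAt] with x hx
    rw [mul_comm, ← ENNReal.div_le_iff_le_mul (Or.inl hE0) (Or.inl ENNReal.coe_ne_top)]
    refine le_essInf_of_ae_le _ ?_
    filter_upwards [hx] with y hy
    rw [ENNReal.div_le_iff_le_mul (Or.inl hE0) (Or.inl ENNReal.coe_ne_top), mul_comm]
    exact hy
  obtain ⟨x0, h01, h02⟩ := ae_restrict_exists Q (hS1.and hS2)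
  have hStop : S' ≠ ∞ :=
    (lt_of_le_of_lt h01 (phiInv_lt_top hψ ENNReal.coe_lt_top)).ne
  have hS0 : S' ≠ 0 := by
    intro h0
    rw [h0, mul_zero] at h02
    exact absurd (phiInv_pos hψ (by exact_mod_cast ht0)) (not_lt.2 h02)
  clear_value S'
  lift S' to ℝ≥0 using hStop
  have hS0' : 0 < S' := pos_iff_ne_zero.2 (by exact_mod_cast hS0)
  refine ⟨S', hS0', fun _ => 0, by simp, ?_⟩
  have hLE : 1 ≤ L * E := one_le_mul hL hE1
  filter_upwards [hS1, hS2] with x hx1 hx2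
  rw [← ht]
  constructor
  · have h1 : ((S' / (2 * (L * E)) : ℝ≥0) : ℝ≥0∞) < phiInv ψ x t := by
      refine lt_of_lt_of_le ?_ hx1
      norm_cast
      apply div_lt_self hS0'
      calc (1 : ℝ≥0) < 2 * 1 := by norm_num
        _ ≤ 2 * (L * E) := by gcongr
    refine (lt_of_lt_phiInv h1).le.trans ?_
    rw [add_zero]
    have : (1 : ℝ≥0∞) ≤ ((2 * (L * E) : ℝ≥0) : ℝ≥0∞) := by
      norm_cast
      exact le_trans hLE (by rw [two_mul]; simp)
    exact le_mul_of_one_le_left (by simp) this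
  · intro g
    by_cases hg : g ≤ 1
    · have : (t : ℝ≥0∞) * g ≤ t * 1 := by gcongr; exact_mod_cast hg
      rw [mul_one] at this
      exact this.trans (le_trans le_add_self le_self_add)
    push Not at hg
    have hg0 : 0 < g := lt_trans one_pos hg
    have h1 : phiInv ψ x (g * t) < ((2 * (L * E) * g * S' : ℝ≥0) : ℝ≥0∞) := by
      calc phiInv ψ x (g * t) ≤ L * g * phiInv ψ x t := phiInv_scale hL hψ hinc x g hg.le t
        _ ≤ L * g * (E * S') := by gcongr
        _ = ((L * E * g * S' : ℝ≥0) : ℝ≥0∞) := by push_cast; ring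
        _ < _ := by
          norm_cast
          have : 0 < L * E := lt_of_lt_of_le one_pos hLE
          have h3 : L * E < 2 * (L * E) := by rw [two_mul]; exact lt_add_of_pos_right _ this
          gcongr
    have h2 := le_of_phiInv_lt hψ h1
    rw [mul_comm]
    exact h2.trans (le_trans le_self_add le_self_add)

/-- Large cubes. -/
lemma key_large (hn : 0 < n) {a : ℝ} (hφ : IsWeakPhi Set.univ φ) (hψ : IsWeakPhi Set.univ ψ)
    {c₁ c₂ : ℝ≥0} (hc : 0 < c₁) (hinv : ∀ x : RSp n, ∀ t : ℝ≥0, 0 < t →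
    (c₁ : ℝ≥0∞) * ((t : ℝ≥0∞) ^ a * phiInv ψ x t) ≤ phiInv φ x t ∧
    phiInv φ x t ≤ (c₂ : ℝ≥0∞) * ((t : ℝ≥0∞) ^ a * phiInv ψ x t))
    (ha0 : A0 Set.univ φ) (ha2 : A2 φ) :
    ∃ C : ℝ≥0, 1 ≤ C ∧ ∀ Q : Cube n, 1 ≤ volume Q.set → KeyEst ψ C Q := by
  obtain ⟨L, hL, hinc⟩ := hψ.almost_inc
  obtain ⟨L', hL', hinc'⟩ := hφ.almost_inc
  obtain ⟨β0, hβ0, -, hA0⟩ := ha0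
  rw [Measure.restrict_univ] at hA0
  obtain ⟨φi, -, h, hh, -, β, hβ, -, s, hs, hA2⟩ := ha2
  -- uniform constants
  set E : ℝ≥0 := 4 * L' / (β * β) * c₂ / c₁ + β0⁻¹ * c₁⁻¹ + c₂ * β0⁻¹ + 1 with hE
  have hE1 : 1 ≤ E := by rw [hE]; simp
  have hE0 : 0 < E := lt_of_lt_of_le one_pos hE1
  have hL0 : 0 < L := lt_of_lt_of_le one_pos hL
  have hEne : (E : ℝ≥0∞) ≠ 0 := by exact_mod_cast hE0.ne'
  set σ : ℝ≥0 := min (s / 2) 1 with hσ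
  have hσ0 : 0 < σ := lt_min (half_pos hs) one_pos
  have hσ1 : σ ≤ 1 := min_le_right _ _
  have hσs : 2 * σ ≤ s := by
    calc 2 * σ ≤ 2 * (s / 2) := by gcongr; exact min_le_left _ _
      _ = s := by rw [mul_div_cancel₀]; norm_num
  -- a.e. bounds at `1`
  have hG1 : ∀ᵐ x ∂(volume : Measure (RSp n)), phiInv ψ x 1 ≤ E ∧ 1 ≤ E * phiInv ψ x 1 := by
    filter_upwards [hA0] with x hx
    have h1 := hinv x 1 one_pos
    simp only [ENNReal.coe_one, ENNReal.one_rpow, one_mul] at h1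
    constructor
    · have e1 := h1.1.trans hx.2
      rw [mul_comm, ← ENNReal.le_div_iff_mul_le (Or.inl (by exact_mod_cast hc.ne'))
        (Or.inl ENNReal.coe_ne_top)] at e1
      refine e1.trans ?_
      rw [ENNReal.div_eq_inv_mul, ← ENNReal.coe_inv hβ0.ne', ← ENNReal.coe_inv hc.ne']
      norm_cast
      rw [hE, mul_comm]
      exact le_trans (le_trans le_add_self le_self_add) le_self_add
    · have e1 := hx.1.trans h1.2
      have hb : (β0 : ℝ≥0∞) ≠ 0 := by exact_mod_cast hβ0.ne'
      calc (1 : ℝ≥0∞) = ((β0⁻¹ : ℝ≥0) : ℝ≥0∞) * β0 := by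
            rw [← ENNReal.coe_mul, inv_mul_cancel₀ hβ0.ne']; simp
        _ ≤ ((β0⁻¹ : ℝ≥0) : ℝ≥0∞) * (c₂ * phiInv ψ x 1) := by gcongr
        _ = ((c₂ * β0⁻¹ : ℝ≥0) : ℝ≥0∞) * phiInv ψ x 1 := by push_cast; ring
        _ ≤ E * phiInv ψ x 1 := by
            gcongr
            rw [hE]
            exact le_trans le_add_self le_self_add
  -- two-point comparison
  have hcmp : ∀ x y : RSp n, (∀ t : ℝ≥0,
      (φi t ≤ (s : ℝ≥0∞) → φ x (β * t) ≤ φi t + h x) ∧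
      (φ x t ≤ (s : ℝ≥0∞) → φi (β * t) ≤ φ x t + h x)) → (∀ t : ℝ≥0,
      (φi t ≤ (s : ℝ≥0∞) → φ y (β * t) ≤ φi t + h y) ∧
      (φ y t ≤ (s : ℝ≥0∞) → φi (β * t) ≤ φ y t + h y)) →
      ∀ u : ℝ≥0, 0 < u → u ≤ σ → h x ≤ u → h y ≤ u → phiInv ψ x u ≤ E * phiInv ψ y u := by
    intro x y hx hy u hu huσ hxu hyu
    have h2 := A2_compare hφ hL' hinc' hβ (fun t => (hx t).2) (fun t => (hy t).1) u hu
      (le_trans (by gcongr) hσs) hxu hyu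
    refine (psiInv_compare hc u hu (hinv x u hu).1 (hinv y u hu).2 h2).trans ?_
    gcongr
    rw [hE]
    exact le_trans (le_trans le_self_add le_self_add) le_self_add
  set C : ℝ≥0 := 2 * (L * L * E * E * E * σ⁻¹) + (∫⁻ x, h x).toNNReal with hC
  have hσi : 1 ≤ σ⁻¹ := (one_le_inv₀ hσ0).2 hσ1
  have hC2 : 2 * (L * L * E * E * E * σ⁻¹) ≤ C := by rw [hC]; exact le_self_add
  have hCL : 2 * (L * E) ≤ C := by
    refine le_trans ?_ hC2
    gcongr 2 * ?_
    calc L * E = L * 1 * E * 1 * 1 * 1 := by ring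
      _ ≤ L * L * E * E * E * σ⁻¹ := by gcongr
  have hCEE : 2 * (E * E) ≤ C := by
    refine le_trans ?_ hC2
    gcongr 2 * ?_
    calc E * E = 1 * 1 * E * E * 1 * 1 := by ring
      _ ≤ L * L * E * E * E * σ⁻¹ := by gcongr
  have hCE : 2 * E ≤ C := le_trans (by gcongr; exact le_mul_of_one_le_left zero_le hE1) hCEE
  have hCσ : σ⁻¹ ≤ C := by
    refine le_trans ?_ hC2
    calc σ⁻¹ = 1 * (1 * 1 * 1 * 1 * 1 * σ⁻¹) := by ring
      _ ≤ 2 * (L * L * E * E * E * σ⁻¹) := by gcongr; norm_num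
  have hC1 : 1 ≤ C := hσi.trans hCσ
  have hC0 : 0 < C := lt_of_lt_of_le one_pos hC1
  refine ⟨C, hC1, ?_⟩
  intro Q hQ
  obtain ⟨t, ht⟩ : ∃ t : ℝ≥0, (t : ℝ≥0∞) = (volume Q.set)⁻¹ :=
    ⟨_, ENNReal.coe_toNNReal (ENNReal.inv_ne_top.2 Q.volume_pos.ne')⟩
  have ht0 : 0 < t := by
    have : (0 : ℝ≥0∞) < t := by rw [ht]; exact ENNReal.inv_pos.2 Q.volume_lt_top.ne
    exact_mod_cast this
  have ht1 : t ≤ 1 := by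
    have : (t : ℝ≥0∞) ≤ 1 := by rw [ht]; exact ENNReal.inv_le_one.2 hQ
    exact_mod_cast this
  -- the base point
  obtain ⟨x0, hx0, hx0A, hx0G⟩ : ∃ x0, h x0 ≤ t ∧ (∀ t : ℝ≥0,
      (φi t ≤ (s : ℝ≥0∞) → φ x0 (β * t) ≤ φi t + h x0) ∧
      (φ x0 t ≤ (s : ℝ≥0∞) → φi (β * t) ≤ φ x0 t + h x0)) ∧
      (phiInv ψ x0 1 ≤ E ∧ 1 ≤ E * phiInv ψ x0 1) := by
    by_contra hcon
    push Not at hcon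
    have h1 : ∀ᵐ x ∂(volume : Measure (RSp n)), (t : ℝ≥0∞) ≤ h x := by
      filter_upwards [hA2, hG1] with x hx1 hx2
      by_contra hlt
      exact absurd hx2.2 (not_le.2 (hcon x (not_le.1 hlt).le hx1 hx2.1))
    have h2 := lintegral_mono_ae h1
    have : Nonempty (Fin n) := ⟨⟨0, hn⟩⟩
    have h3 : volume (Set.univ : Set (RSp n)) = ∞ := measure_univ_of_isAddLeftInvariant _
    rw [lintegral_const, h3, ENNReal.mul_top (by exact_mod_cast ht0.ne')] at h2
    exact absurd hh (not_lt.2 h2)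
  have hStop : phiInv ψ x0 t ≠ ∞ := (phiInv_lt_top hψ ENNReal.coe_lt_top).ne
  obtain ⟨S, hS⟩ : ∃ S : ℝ≥0, (S : ℝ≥0∞) = phiInv ψ x0 t := ⟨_, ENNReal.coe_toNNReal hStop⟩
  have hS0 : 0 < S := by
    have : (0 : ℝ≥0∞) < S := by rw [hS]; exact phiInv_pos hψ (by exact_mod_cast ht0)
    exact_mod_cast this
  -- lower bound for `S`
  have hSt : t ≤ E * L * S := by
    have h1 := phiInv_scale hL hψ hinc x0 t⁻¹ ((one_le_inv₀ ht0).2 ht1) t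
    rw [← ENNReal.coe_mul, inv_mul_cancel₀ ht0.ne', ENNReal.coe_one, ← hS] at h1
    have h2 : (1 : ℝ≥0∞) ≤ E * (L * (t⁻¹ : ℝ≥0) * S) := hx0G.2.trans (by gcongr)
    have h3 : 1 ≤ E * (L * t⁻¹ * S) := by exact_mod_cast h2
    calc t = t * 1 := by ring
      _ ≤ t * (E * (L * t⁻¹ * S)) := by gcongr
      _ = (t * t⁻¹) * (E * L * S) := by ring
      _ = E * L * S := by rw [mul_inv_cancel₀ ht0.ne', one_mul]
  refine ⟨S, hS0, h, ?_, ?_⟩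
  · refine (setLIntegral_le_lintegral _ _).trans ?_
    rw [← ENNReal.coe_toNNReal hh.ne]
    norm_cast
    rw [hC]; exact le_add_self
  filter_upwards [ae_restrict_of_ae hA2, ae_restrict_of_ae hG1] with x hx2 hxG
  rw [← ht]
  -- a helper
  have half : ∀ {v : ℝ≥0∞} {D : ℝ≥0}, 0 < D → 2 * D ≤ C → (S : ℝ≥0∞) ≤ D * phiInv ψ x v →
      ψ x (S / C) ≤ v := by
    intro v D hD hDC hSv
    refine (lt_of_lt_phiInv ?_).le
    have hD' : (D : ℝ≥0∞) ≠ 0 := by exact_mod_cast hD.ne'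
    have e1 : ((S / D : ℝ≥0) : ℝ≥0∞) ≤ phiInv ψ x v := by
      rw [ENNReal.coe_div hD.ne', ENNReal.div_le_iff_le_mul (Or.inl hD')
        (Or.inl ENNReal.coe_ne_top), mul_comm]
      exact hSv
    refine lt_of_lt_of_le ?_ e1
    norm_cast
    have : D < C := lt_of_lt_of_le (by rw [two_mul]; exact lt_add_of_pos_right _ hD) hDC
    gcongr
  constructor
  · rcases le_or_gt (max (t : ℝ≥0∞) (h x)) σ with hle | hgt
    · obtain ⟨u, hu⟩ : ∃ u : ℝ≥0, (u : ℝ≥0∞) = max (t : ℝ≥0∞) (h x) :=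
        ⟨_, ENNReal.coe_toNNReal (lt_of_le_of_lt hle ENNReal.coe_lt_top).ne⟩
      have hut : (t : ℝ≥0∞) ≤ u := by rw [hu]; exact le_max_left _ _
      have huh : h x ≤ u := by rw [hu]; exact le_max_right _ _
      have h1 := hcmp x0 x hx0A hx2 u (lt_of_lt_of_le ht0 (by exact_mod_cast hut))
        (by rw [← hu] at hle; exact_mod_cast hle) (hx0.trans hut) huh
      have h2 : (S : ℝ≥0∞) ≤ E * phiInv ψ x u := by
        rw [hS]; exact (phiInv_mono hut).trans h1
      refine (half hE0 hCE h2).trans ?_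
      rw [hu]
      calc max (t : ℝ≥0∞) (h x) ≤ t + h x := max_le le_self_add le_add_self
        _ = 1 * (t + h x) := by rw [one_mul]
        _ ≤ C * (t + h x) := by gcongr; exact_mod_cast hC1
    · have h2 : (S : ℝ≥0∞) ≤ (E * E : ℝ≥0) * phiInv ψ x 1 := by
        rw [hS]
        calc phiInv ψ x0 t ≤ phiInv ψ x0 1 := phiInv_mono (by exact_mod_cast ht1)
          _ ≤ E * 1 := by rw [mul_one]; exact hx0G.1
          _ ≤ E * (E * phiInv ψ x 1) := by gcongr; exact hxG.2
          _ = _ := by push_cast; ring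
      refine (half (mul_pos hE0 hE0) hCEE h2).trans ?_
      calc (1 : ℝ≥0∞) = (σ⁻¹ : ℝ≥0) * σ := by
            rw [← ENNReal.coe_mul, inv_mul_cancel₀ hσ0.ne']; simp
        _ ≤ C * max (t : ℝ≥0∞) (h x) := by gcongr
        _ ≤ C * (t + h x) := by gcongr; exact max_le le_self_add le_add_self
  · intro g
    by_cases hg : g ≤ 1
    · have : (t : ℝ≥0∞) * g ≤ t * 1 := by gcongr; exact_mod_cast hg
      rw [mul_one] at this
      exact this.trans (le_trans le_add_self le_self_add)
    push Not at hg
    have hg0 : 0 < g := lt_trans one_pos hg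
    by_cases hgh : (t : ℝ≥0∞) * g ≤ h x
    · exact hgh.trans le_add_self
    push Not at hgh
    have hfin : ∀ D : ℝ≥0, 0 < D → 2 * D ≤ C → phiInv ψ x ((t * g : ℝ≥0) : ℝ≥0∞) ≤
        ((D * g * S : ℝ≥0) : ℝ≥0∞) → (t : ℝ≥0∞) * g ≤ ψ x (C * g * S) + t + h x := by
      intro D hD hDC hle
      have h1 : phiInv ψ x ((t * g : ℝ≥0) : ℝ≥0∞) < ((C * g * S : ℝ≥0) : ℝ≥0∞) := by
        refine lt_of_le_of_lt hle ?_
        norm_cast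
        have : D < C := lt_of_lt_of_le (by rw [two_mul]; exact lt_add_of_pos_right _ hD) hDC
        gcongr
      have h2 := le_of_phiInv_lt hψ h1
      rw [ENNReal.coe_mul] at h2
      exact h2.trans (le_trans le_self_add le_self_add)
    rcases le_or_gt (t * g) σ with hle | hgt
    · have h1 := hcmp x x0 hx2 hx0A (t * g) (mul_pos ht0 hg0) hle
        (by push_cast; exact hgh.le)
        (hx0.trans (by
          norm_cast
          exact le_mul_of_one_le_right zero_le hg.le))
      have h2 := phiInv_scale hL hψ hinc x0 g hg.le t
      refine hfin (L * E) (mul_pos hL0 hE0) hCL (h1.trans ?_)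
      calc (E : ℝ≥0∞) * phiInv ψ x0 ((t * g : ℝ≥0) : ℝ≥0∞) = E * phiInv ψ x0 (g * t) := by
            rw [mul_comm t g, ENNReal.coe_mul]
        _ ≤ E * (L * g * S) := by rw [hS]; gcongr
        _ = _ := by push_cast; ring
    · have hk : 1 ≤ σ⁻¹ * (t * g) := by
        calc 1 = σ⁻¹ * σ := (inv_mul_cancel₀ hσ0.ne').symm
          _ ≤ σ⁻¹ * (t * g) := by gcongr
      have h2 := phiInv_scale hL hψ hinc x (σ⁻¹ * (t * g)) hk 1
      have h3 : ((t * g : ℝ≥0) : ℝ≥0∞) ≤ ((σ⁻¹ * (t * g) : ℝ≥0) : ℝ≥0∞) * 1 := by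
        rw [mul_one]; norm_cast
        exact le_mul_of_one_le_left zero_le hσi
      refine hfin (L * L * E * E * E * σ⁻¹) (by positivity) hC2
        ((phiInv_mono h3).trans (h2.trans ?_))
      calc (L : ℝ≥0∞) * ((σ⁻¹ * (t * g) : ℝ≥0) : ℝ≥0∞) * phiInv ψ x 1
          ≤ L * ((σ⁻¹ * ((E * L * S) * g) : ℝ≥0) : ℝ≥0∞) * E := by
            gcongr; exact hxG.1
        _ = ((L * L * E * E * 1 * σ⁻¹ * g * S : ℝ≥0) : ℝ≥0∞) := by push_cast; ring
        _ ≤ _ := by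
            norm_cast
            gcongr

lemma key_est (hn : 0 < n) {α : ℝ} (hφ : IsWeakPhi Set.univ φ) (hψ : IsWeakPhi Set.univ ψ)
    (hinv : FracInvRel α φ ψ) (ha0 : A0 Set.univ φ) (ha1 : A1 φ) (ha2 : A2 φ) :
    ∃ C : ℝ≥0, 1 ≤ C ∧ ∀ Q : Cube n, KeyEst ψ C Q := by
  obtain ⟨c₁, c₂, hc, hinv⟩ := hinv
  obtain ⟨C1, h1, k1⟩ := key_small hψ hc hinv ha1
  obtain ⟨C2, h2, k2⟩ := key_large hn hφ hψ hc hinv ha0 ha2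
  refine ⟨max C1 C2, h1.trans (le_max_left _ _), fun Q => ?_⟩
  rcases le_total (volume Q.set) 1 with h | h
  · exact (k1 Q h).mono hψ (lt_of_lt_of_le one_pos h1) (le_max_left _ _)
  · exact (k2 Q h).mono hψ (lt_of_lt_of_le one_pos h2) (le_max_right _ _)

end key
section final
variable {n : ℕ} {φ ψ : RSp n → ℝ≥0 → ℝ≥0∞}

lemma orliczNorm_le {f : RSp n → ℝ} {lam : ℝ≥0} (h0 : 0 < lam)
    (h : (∫⁻ x, φ x (‖f x‖₊ / lam)) ≤ 1) : orliczNorm φ Set.univ f ≤ lam :=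
  sInf_le ⟨lam, ⟨h0, by rwa [Measure.restrict_univ]⟩, rfl⟩

lemma nnnorm_cubeIndicator_of_mem {Q : Cube n} {x : RSp n} (hx : x ∈ Q.set) :
    ‖cubeIndicator Q x‖₊ = 1 := by simp [cubeIndicator, hx]

lemma cubeIndicator_of_notMem {Q : Cube n} {x : RSp n} (hx : x ∉ Q.set) :
    cubeIndicator Q x = 0 := by simp [cubeIndicator, hx]

lemma memOrlicz_cubeIndicator (hφ : IsWeakPhi Set.univ φ) (ha0 : A0 Set.univ φ) (Q : Cube n) :
    MemOrlicz φ Set.univ (cubeIndicator Q) := by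
  obtain ⟨β, hβ, -, hA⟩ := ha0
  rw [Measure.restrict_univ] at hA
  refine ⟨?_, β / 2, half_pos hβ, ?_⟩
  · exact (measurable_const.indicator Q.measurableSet).aemeasurable
  rw [Measure.restrict_univ]
  refine lt_of_le_of_lt (b := ∫⁻ x, Q.set.indicator (fun _ => (1 : ℝ≥0∞)) x) ?_ ?_
  · apply lintegral_mono_ae
    filter_upwards [hA] with x hx
    by_cases hxQ : x ∈ Q.set
    · rw [nnnorm_cubeIndicator_of_mem hxQ, mul_one, Set.indicator_of_mem hxQ]
      refine (lt_of_lt_phiInv (lt_of_lt_of_le ?_ hx.1)).le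
      exact_mod_cast half_lt_self hβ
    · rw [cubeIndicator_of_notMem hxQ]
      simp [hφ.zero x (mem_univ _)]
  · rw [lintegral_indicator Q.measurableSet]
    simpa using Q.volume_lt_top

lemma part_two {α : ℝ} (ha0 : 0 ≤ α / (n : ℝ)) (ha1 : α / (n : ℝ) ≤ 1)
    (hφ : IsWeakPhi Set.univ φ) (hψ : IsWeakPhi Set.univ ψ)
    (hinv : FracInvRel α φ ψ) (hA0 : A0 Set.univ φ) (b : RSp n → ℝ)
    (hbound : ∃ C : ℝ≥0, ∀ f : RSp n → ℝ, MemOrlicz φ Set.univ f →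
      orliczNorm ψ Set.univ (fracMaximalCommutator α b f) ≤
        (C : ℝ≥0∞) * orliczNorm φ Set.univ f) :
    ∃ C : ℝ≥0, ∀ Q : Cube n,
      orliczNorm ψ Set.univ (commTestFn α Q b) ≤
        (C : ℝ≥0∞) * orliczNorm ψ Set.univ (cubeIndicator Q) := by
  obtain ⟨C0, hC0⟩ := hbound
  obtain ⟨c₁, c₂, hc, hinv⟩ := hinv
  obtain ⟨L, hL, hinc⟩ := hφ.almost_inc
  have hL0 : 0 < L := lt_of_lt_of_le one_pos hL
  set a := α / (n : ℝ) with ha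
  set C : ℝ≥0 := C0 * (8 * L / c₁) + 1 with hC
  have hCpos : 0 < C := by rw [hC]; positivity
  have hCne : (C : ℝ≥0∞) ≠ 0 := by exact_mod_cast hCpos.ne'
  refine ⟨C, fun Q => ?_⟩
  rw [mul_comm, ← ENNReal.div_le_iff_le_mul (Or.inl hCne) (Or.inl ENNReal.coe_ne_top)]
  apply le_sInf
  rintro _ ⟨lam, ⟨hlam, hIntg⟩, rfl⟩
  rw [Measure.restrict_univ] at hIntg
  rw [ENNReal.div_le_iff_le_mul (Or.inl hCne) (Or.inl ENNReal.coe_ne_top)]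
  obtain ⟨t, ht⟩ : ∃ t : ℝ≥0, (t : ℝ≥0∞) = (volume Q.set)⁻¹ :=
    ⟨_, ENNReal.coe_toNNReal (ENNReal.inv_ne_top.2 Q.volume_pos.ne')⟩
  have ht0 : 0 < t := by
    have : (0 : ℝ≥0∞) < t := by rw [ht]; exact ENNReal.inv_pos.2 Q.volume_lt_top.ne
    exact_mod_cast this
  have hT0 : 0 < t ^ a := NNReal.rpow_pos ht0
  set μ : ℝ≥0 := 8 * L / c₁ * lam / t ^ a with hμ
  have hμ0 : 0 < μ := by rw [hμ]; positivity
  -- norm of the indicator in `L^φ`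
  have h1 : orliczNorm φ Set.univ (cubeIndicator Q) ≤ μ := by
    apply orliczNorm_le hμ0
    have hpt : ∀ x, 4 * φ x (‖cubeIndicator Q x‖₊ / μ) ≤
        2 * (ψ x (‖cubeIndicator Q x‖₊ / lam) + Q.set.indicator (fun _ => (t : ℝ≥0∞)) x) := by
      intro x
      by_cases hx : x ∈ Q.set
      · rw [nnnorm_cubeIndicator_of_mem hx, Set.indicator_of_mem hx]
        have e1 := phi_scale hL hφ hinc x (1 / μ) 4 (by norm_num)
        have e2 := phi_le_psi ha0 hφ hψ hc (fun t ht => (hinv x t ht).1) t (1 / lam) ht0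
        have e3 : L * 4 * (1 / μ) = c₁ / 2 * (t ^ a * (1 / lam)) := by
          rw [hμ]
          field_simp
          norm_num
        rw [e3] at e1
        exact le_trans e1 e2
      · rw [cubeIndicator_of_notMem hx]
        simp [hφ.zero x (mem_univ _)]
    have h2 := lintegral_mono (μ := (volume : Measure (RSp n))) hpt
    rw [lintegral_const_mul' _ _ (by simp), lintegral_const_mul' _ _ (by simp),
      lintegral_add_right _ (measurable_const.indicator Q.measurableSet),
      lintegral_indicator Q.measurableSet, setLIntegral_const, ht,
      ENNReal.inv_mul_cancel Q.volume_pos.ne' Q.volume_lt_top.ne] at h2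
    have h3 : (4 : ℝ≥0∞) * ∫⁻ x, φ x (‖cubeIndicator Q x‖₊ / μ) ≤ 4 * 1 := by
      refine h2.trans ?_
      calc (2 : ℝ≥0∞) * ((∫⁻ x, ψ x (‖cubeIndicator Q x‖₊ / lam)) + 1) ≤ 2 * (1 + 1) := by gcongr
        _ = 4 * 1 := by norm_num
    exact (ENNReal.mul_le_mul_iff_right (by simp) (by simp)).1 h3
  have h2 := hC0 _ (memOrlicz_cubeIndicator hφ hA0 Q)
  -- scaling
  have hTne : ((t ^ a : ℝ≥0) : ℝ≥0∞) ≠ 0 := by exact_mod_cast hT0.ne'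
  have h3 : orliczNorm ψ Set.univ (commTestFn α Q b) ≤
      ((t ^ a : ℝ≥0) : ℝ≥0∞) *
        orliczNorm ψ Set.univ (fracMaximalCommutator α b (cubeIndicator Q)) := by
    rw [mul_comm, ← ENNReal.div_le_iff_le_mul (Or.inl hTne) (Or.inl ENNReal.coe_ne_top)]
    apply le_sInf
    rintro _ ⟨ν, ⟨hν, hνi⟩, rfl⟩
    rw [Measure.restrict_univ] at hνi
    rw [ENNReal.div_le_iff_le_mul (Or.inl hTne) (Or.inl ENNReal.coe_ne_top)]
    have : ((ν * t ^ a : ℝ≥0) : ℝ≥0∞) = (ν : ℝ≥0∞) * ((t ^ a : ℝ≥0) : ℝ≥0∞) := ENNReal.coe_mul _ _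
    rw [← this]
    apply orliczNorm_le (mul_pos hν hT0)
    refine le_trans (lintegral_mono fun x => ?_) hνi
    apply hψ.mono x (mem_univ _)
    by_cases hx : x ∈ Q.set
    · rw [commTestFn_eq ha0 ha1 Q b hx, nnnorm_neg, nnnorm_mul]
      have e : ‖((volume Q.set).toReal ^ a)⁻¹‖₊ = t ^ a := by
        have e1 : (volume Q.set).toReal = ((t⁻¹ : ℝ≥0) : ℝ) := by
          have : volume Q.set = ((t⁻¹ : ℝ≥0) : ℝ≥0∞) := by
            rw [ENNReal.coe_inv ht0.ne', ht, inv_inv]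
          rw [this]; rfl
        rw [e1]
        ext
        rw [coe_nnnorm, Real.norm_of_nonneg (by positivity)]
        push_cast
        rw [Real.inv_rpow (by positivity), inv_inv]
      rw [← ha, e, mul_comm ν, mul_div_mul_left _ _ hT0.ne']
    · simp [commTestFn, hx]
  calc orliczNorm ψ Set.univ (commTestFn α Q b)
      ≤ ((t ^ a : ℝ≥0) : ℝ≥0∞) * (C0 * μ) := h3.trans (by gcongr; exact h2.trans (by gcongr))
    _ = ((C0 * (8 * L / c₁) * lam : ℝ≥0) : ℝ≥0∞) := by
        norm_cast
        rw [hμ]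
        field_simp
    _ ≤ (lam : ℝ≥0∞) * (C : ℝ≥0∞) := by
        norm_cast
        rw [mul_comm lam]
        gcongr
        rw [hC]; exact le_self_add

lemma lintegral_osc (hn : 0 < n) (b : RSp n → ℝ) (hb : LocallyIntegrable b volume) (Q : Cube n) :
    ∫⁻ x in Q.set, (‖b x - cubeAvg Q b‖₊ : ℝ≥0∞) =
      2 * ∫⁻ x in Q.set, ENNReal.ofReal (cubeAvg Q b - b x) := by
  have hi : IntegrableOn b Q.set volume := hb.integrableOn_isCompact (Q.isCompact_set hn)
  have hv : 0 < volume.real Q.set := ENNReal.toReal_pos Q.volume_pos.ne' Q.volume_lt_top.ne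
  have hcst : IntegrableOn (fun _ : RSp n => cubeAvg Q b) Q.set volume :=
    integrableOn_const Q.volume_lt_top.ne
  set m := cubeAvg Q b with hm
  have hf : IntegrableOn (fun x => b x - m) Q.set volume := hi.sub hcst
  have hf0 : ∫ x in Q.set, (b x - m) = 0 := by
    rw [integral_sub hi hcst, setIntegral_const, hm, cubeAvg, setAverage_eq]
    simp only [smul_eq_mul]
    field_simp
    ring
  have hg : IntegrableOn (fun x => max (m - b x) 0) Q.set volume := (hcst.sub hi).pos_part
  have h1 : ∫ x in Q.set, ‖b x - m‖ = 2 * ∫ x in Q.set, max (m - b x) 0 := by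
    have e : ∀ x, ‖b x - m‖ = 2 * max (m - b x) 0 + (b x - m) := by
      intro x
      rw [Real.norm_eq_abs]
      rcases le_total (b x) m with h | h
      · rw [abs_of_nonpos (by linarith), max_eq_left (by linarith)]; ring
      · rw [abs_of_nonneg (by linarith), max_eq_right (by linarith)]; ring
    simp_rw [e]
    rw [integral_add (hg.const_mul 2) hf, hf0, add_zero, integral_const_mul]
  have h2 : ∫⁻ x in Q.set, (‖b x - m‖₊ : ℝ≥0∞) = ENNReal.ofReal (∫ x in Q.set, ‖b x - m‖) := by
    rw [ofReal_integral_norm_eq_lintegral_enorm hf]; rfl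
  rw [h2, h1, ENNReal.ofReal_mul (by norm_num), ofReal_integral_eq_lintegral_ofReal hg
    (Eventually.of_forall fun x => le_max_right _ _)]
  simp

lemma test_ge (hn : 0 < n) {α : ℝ} (ha0 : 0 ≤ α / (n : ℝ)) (ha1 : α / (n : ℝ) ≤ 1)
    (b : RSp n → ℝ) (hb : LocallyIntegrable b volume) (Q : Cube n) :
    ∀ᵐ x ∂(volume.restrict Q.set), Real.toNNReal (cubeAvg Q b - b x) ≤ ‖commTestFn α Q b x‖₊ := by
  filter_upwards [ae_restrict_of_ae (restFracMaximal_lt_top hn ha0 ha1 b hb Q),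
    ae_restrict_mem Q.measurableSet] with x hfin hx
  have hi : IntegrableOn b Q.set volume := hb.integrableOn_isCompact (Q.isCompact_set hn)
  have hv0 := Q.volume_pos.ne'
  have hvt := Q.volume_lt_top.ne
  have hlow : volume Q.set ^ (α / (n : ℝ) - 1) * ∫⁻ y in Q.set, (‖b y‖₊ : ℝ≥0∞) ≤
      restFracMaximal α Q b x :=
    le_iSup_of_le Q (le_iSup_of_le hx (le_iSup_of_le Subset.rfl le_rfl))
  have h1 : cubeAvg Q b ≤
      (volume Q.set ^ (-(α / (n : ℝ)))).toReal * (restFracMaximal α Q b x).toReal := by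
    have e1 : (volume Q.set)⁻¹ * ∫⁻ y in Q.set, (‖b y‖₊ : ℝ≥0∞) ≤
        volume Q.set ^ (-(α / (n : ℝ))) * restFracMaximal α Q b x := by
      calc (volume Q.set)⁻¹ * ∫⁻ y in Q.set, (‖b y‖₊ : ℝ≥0∞)
          = volume Q.set ^ (-(α / (n : ℝ))) *
            (volume Q.set ^ (α / (n : ℝ) - 1) * ∫⁻ y in Q.set, (‖b y‖₊ : ℝ≥0∞)) := by
            rw [← mul_assoc, ← ENNReal.rpow_add _ _ hv0 hvt, ← ENNReal.rpow_neg_one]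
            congr 2; ring
        _ ≤ _ := by gcongr
    have e2 : volume Q.set ^ (-(α / (n : ℝ))) ≠ ∞ := by
      rw [Ne, ENNReal.rpow_eq_top_iff]; tauto
    have e3 := ENNReal.toReal_mono (ENNReal.mul_ne_top e2 hfin.ne) e1
    rw [ENNReal.toReal_mul, ENNReal.toReal_mul] at e3
    refine le_trans ?_ e3
    rw [cubeAvg, setAverage_eq, smul_eq_mul, ENNReal.toReal_inv]
    have e4 : (∫⁻ y in Q.set, (‖b y‖₊ : ℝ≥0∞)).toReal = ∫ y in Q.set, ‖b y‖ := by
      rw [integral_norm_eq_lintegral_enorm hi.1]; rfl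
    rw [e4]
    have e5 : ∫ y in Q.set, b y ≤ ∫ y in Q.set, ‖b y‖ :=
      (Real.le_norm_self _).trans (norm_integral_le_integral_norm _)
    exact mul_le_mul_of_nonneg_left e5 (by positivity)
  rw [Real.toNNReal_le_iff_le_coe, coe_nnnorm, Real.norm_eq_abs]
  simp only [commTestFn, Set.indicator_of_mem hx]
  rw [abs_sub_comm]
  exact le_trans (by linarith) (le_abs_self _)

lemma part_one (hn : 0 < n) {α : ℝ} (ha0 : 0 ≤ α / (n : ℝ)) (ha1 : α / (n : ℝ) ≤ 1)
    (hψ : IsWeakPhi Set.univ ψ)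
    (hkey : ∃ C : ℝ≥0, 1 ≤ C ∧ ∀ Q : Cube n, KeyEst ψ C Q)
    (b : RSp n → ℝ) (hb : LocallyIntegrable b volume)
    (h2 : ∃ C : ℝ≥0, ∀ Q : Cube n,
      orliczNorm ψ Set.univ (commTestFn α Q b) ≤
        (C : ℝ≥0∞) * orliczNorm ψ Set.univ (cubeIndicator Q)) : IsBMO b := by
  obtain ⟨C1, hC1, hkey⟩ := hkey
  obtain ⟨C2, h2⟩ := h2
  obtain ⟨L, hL, hinc⟩ := hψ.almost_inc
  have hC10 : 0 < C1 := lt_of_lt_of_le one_pos hC1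
  have hL0 : 0 < L := lt_of_lt_of_le one_pos hL
  set k : ℝ≥0 := C1 * (1 + C1) with hk
  have hk1 : 1 ≤ k := one_le_mul hC1 le_self_add
  have hk0 : 0 < k := lt_of_lt_of_le one_pos hk1
  set K : ℝ≥0 := C2 * (C1 * L * k) + 1 with hK
  have hK0 : 0 < K := by rw [hK]; positivity
  refine ⟨hb, ?_⟩
  refine lt_of_le_of_lt (b := ((2 * (C1 * K * (2 + C1)) : ℝ≥0) : ℝ≥0∞)) ?_ ENNReal.coe_lt_top
  refine iSup_le fun Q => ?_
  obtain ⟨S, hS, H, hH, hae⟩ := hkey Q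
  have hvol : (volume Q.set)⁻¹ * volume Q.set = 1 :=
    ENNReal.inv_mul_cancel Q.volume_pos.ne' Q.volume_lt_top.ne
  -- norm of the indicator
  have hχ : orliczNorm ψ Set.univ (cubeIndicator Q) ≤ ((C1 * L * k / S : ℝ≥0) : ℝ≥0∞) := by
    apply orliczNorm_le (by positivity)
    have e0 : (∫⁻ x, ψ x (‖cubeIndicator Q x‖₊ / (C1 * L * k / S))) =
        ∫⁻ x in Q.set, ψ x (1 / (C1 * L * k / S)) := by
      rw [← lintegral_indicator Q.measurableSet]
      congr 1
      ext x
      by_cases hx : x ∈ Q.set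
      · rw [nnnorm_cubeIndicator_of_mem hx, Set.indicator_of_mem hx]
      · rw [cubeIndicator_of_notMem hx, Set.indicator_of_notMem hx]
        simp [hψ.zero x (mem_univ _)]
    rw [e0]
    have e1 : ∀ᵐ x ∂(volume.restrict Q.set), (k : ℝ≥0∞) * ψ x (1 / (C1 * L * k / S)) ≤
        C1 * ((volume Q.set)⁻¹ + H x) := by
      filter_upwards [hae] with x hx
      have e2 := phi_scale hL hψ hinc x (1 / (C1 * L * k / S)) k hk1
      have e3 : L * k * (1 / (C1 * L * k / S)) = S / C1 := by field_simp
      rw [e3] at e2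
      exact e2.trans hx.1
    have e4 := lintegral_mono_ae e1
    rw [lintegral_const_mul' _ _ (by simp), lintegral_const_mul' _ _ (by simp),
      lintegral_add_left measurable_const, setLIntegral_const, hvol] at e4
    have e5 : (k : ℝ≥0∞) * ∫⁻ x in Q.set, ψ x (1 / (C1 * L * k / S)) ≤ k * 1 := by
      refine e4.trans ?_
      rw [mul_one, hk]
      push_cast
      gcongr
    exact (ENNReal.mul_le_mul_iff_right (by exact_mod_cast hk0.ne') (by simp)).1 e5
  have htest : orliczNorm ψ Set.univ (commTestFn α Q b) < ((K / S : ℝ≥0) : ℝ≥0∞) := by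
    refine lt_of_le_of_lt ((h2 Q).trans (mul_le_mul_right hχ _)) ?_
    norm_cast
    rw [← mul_div_assoc]
    have : C2 * (C1 * L * k) < K := by rw [hK]; exact lt_add_of_pos_right _ one_pos
    gcongr
  obtain ⟨_, ⟨ν, ⟨hν, hνi⟩, rfl⟩, hνlt⟩ := sInf_lt_iff.1 htest
  have hνlt : ν < K / S := ENNReal.coe_lt_coe.1 hνlt
  rw [Measure.restrict_univ] at hνi
  -- measurable minorant
  set b' := hb.aestronglyMeasurable.mk b with hb'
  have hb'm : Measurable b' := hb.aestronglyMeasurable.stronglyMeasurable_mk.measurable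
  have hbb' : ∀ᵐ x ∂(volume.restrict Q.set), b x = b' x :=
    ae_restrict_of_ae hb.aestronglyMeasurable.ae_eq_mk
  set g : RSp n → ℝ≥0 := fun x => Real.toNNReal (cubeAvg Q b - b' x) with hg
  have hgm : Measurable g := (measurable_const.sub hb'm).real_toNNReal
  have hψm : AEMeasurable (fun x => ψ x (C1 * (g x / (C1 * K)) * S)) (volume.restrict Q.set) := by
    have := hψ.meas (fun x => C1 * (g x / (C1 * K)) * S) (by fun_prop)
    rw [Measure.restrict_univ] at this
    exact this.restrict
  have hpt : ∀ᵐ x ∂(volume.restrict Q.set), (volume Q.set)⁻¹ * ((g x / (C1 * K) : ℝ≥0) : ℝ≥0∞) ≤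
      ψ x (C1 * (g x / (C1 * K)) * S) + ((volume Q.set)⁻¹ + H x) := by
    filter_upwards [hae] with x hx
    rw [← add_assoc]
    exact hx.2 _
  have hψi : ∫⁻ x in Q.set, ψ x (C1 * (g x / (C1 * K)) * S) ≤ 1 := by
    refine le_trans ?_ ((setLIntegral_le_lintegral Q.set _).trans hνi)
    apply lintegral_mono_ae
    filter_upwards [hbb', test_ge hn ha0 ha1 b hb Q] with x hx1 hx2
    apply hψ.mono x (mem_univ _)
    have e1 : g x ≤ ‖commTestFn α Q b x‖₊ := by
      simp only [hg]; rw [← hx1]; exact hx2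
    calc C1 * (g x / (C1 * K)) * S = g x / (K / S) := by field_simp
      _ ≤ ‖commTestFn α Q b x‖₊ / ν := by gcongr
  have hIntg := lintegral_mono_ae hpt
  rw [lintegral_add_left' hψm, lintegral_add_left measurable_const, setLIntegral_const, hvol,
    lintegral_const_mul' _ _ (ENNReal.inv_ne_top.2 Q.volume_pos.ne')] at hIntg
  have hfin : (volume Q.set)⁻¹ * ∫⁻ x in Q.set, ((g x / (C1 * K) : ℝ≥0) : ℝ≥0∞) ≤
      ((2 + C1 : ℝ≥0) : ℝ≥0∞) := by
    refine hIntg.trans ?_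
    calc _ ≤ (1 : ℝ≥0∞) + (1 + C1) := by gcongr
      _ = _ := by push_cast; rw [← add_assoc]; norm_num
  rw [lintegral_osc hn b hb Q]
  have e : ∫⁻ x in Q.set, ENNReal.ofReal (cubeAvg Q b - b x) =
      ((C1 * K : ℝ≥0) : ℝ≥0∞) * ∫⁻ x in Q.set, ((g x / (C1 * K) : ℝ≥0) : ℝ≥0∞) := by
    rw [← lintegral_const_mul' _ _ ENNReal.coe_ne_top]
    apply lintegral_congr_ae
    filter_upwards [hbb'] with x hx
    rw [← ENNReal.coe_mul, mul_div_cancel₀ _ (by positivity), hx]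
    rfl
  rw [e]
  calc (volume Q.set)⁻¹ * (2 * (((C1 * K : ℝ≥0) : ℝ≥0∞) *
        ∫⁻ x in Q.set, ((g x / (C1 * K) : ℝ≥0) : ℝ≥0∞)))
      = 2 * (((C1 * K : ℝ≥0) : ℝ≥0∞) * ((volume Q.set)⁻¹ *
        ∫⁻ x in Q.set, ((g x / (C1 * K) : ℝ≥0) : ℝ≥0∞))) := by ring
    _ ≤ 2 * (((C1 * K : ℝ≥0) : ℝ≥0∞) * ((2 + C1 : ℝ≥0) : ℝ≥0∞)) := by gcongr
    _ = _ := by push_cast; ring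

end final

/-- if `[M_α,b] : L^φ(ℝⁿ) → L^ψ(ℝⁿ)` is bounded, then `b ∈ BMO(ℝⁿ)`
and `‖(b − |Q|^{−α/n}M_{α,Q}b)χ_Q‖_ψ ≤ C‖χ_Q‖_ψ` uniformly in the cube `Q`. -/
theorem statement16 {n : ℕ} (hn : 0 < n) (p q α r : ℝ)
    (φ ψ : RSp n → ℝ≥0 → ℝ≥0∞)
    (hp : 1 < p) (hpq : p ≤ q) (hα : α / (n : ℝ) = 1 / p - 1 / q)
    (hφ : IsWeakPhi Set.univ φ) (hψ : IsWeakPhi Set.univ ψ)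
    (hinv : FracInvRel α φ ψ)
    (hr₁ : α / (n : ℝ) < r) (hr₂ : r ≤ 1 / p)
    (ha0 : A0 Set.univ φ) (ha1 : A1 φ) (ha2 : A2 φ)
    (hainc : AInc p Set.univ φ) (hadec : ADec (1 / r) Set.univ φ)
    (b : RSp n → ℝ) (hb : LocallyIntegrable b volume)
    (hbound : ∃ C : ℝ≥0, ∀ f : RSp n → ℝ, MemOrlicz φ Set.univ f →
      orliczNorm ψ Set.univ (fracMaximalCommutator α b f) ≤
        (C : ℝ≥0∞) * orliczNorm φ Set.univ f) :
    IsBMO b ∧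
    ∃ C : ℝ≥0, ∀ Q : Cube n,
      orliczNorm ψ Set.univ (commTestFn α Q b) ≤
        (C : ℝ≥0∞) * orliczNorm ψ Set.univ (cubeIndicator Q) := by
  have ha0 : 0 ≤ α / (n : ℝ) := by
    rw [hα]
    have : 1 / q ≤ 1 / p := one_div_le_one_div_of_le (by linarith) hpq
    linarith
  have ha1' : α / (n : ℝ) ≤ 1 := by
    have : 1 / p ≤ 1 := by rw [div_le_one (by linarith)]; exact hp.le
    linarith
  have h2 := part_two ha0 ha1' hφ hψ hinv ‹A0 Set.univ φ› b hbound
  exact ⟨part_one hn ha0 ha1' hψ (key_est hn hφ hψ hinv ‹A0 Set.univ φ› ha1 ha2) b hb h2, h2⟩
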